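/- There exists a sequence {ψ_k}_{k=1}^∞ of first-order sentences of the language L, with ψ_k of quantifier depth k for each k, such that: (a) for every sequence p̄ with 0 < p(i) < 1 for all i satisfying log(∏_{i=1}^n (1 − p(i))) / log n → 0 as n → ∞, one has lim_{n→∞} Prob(n,p̄;ψ_k) = 1 for every k; and (b) for any such p̄, the function m(k) = min{ i : Prob(i,p̄;ψ_k) > 0 } grows faster than every computable function, i.e., there is no computable g : ℕ → ℕ with m(k) ≤ g(k) for all k. -/

import Mathlib

open FirstOrder Filter

namespace RandomGraph

/-- The set of potential edges of a graph on `Fin n` (pairs `(v,w)` with `v < w`).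
Vertex `v : Fin n` represents the number `v + 1` of the interval `[n] = {1, …, n}`. -/
abbrev EdgeIdx (n : ℕ) := {e : Fin n × Fin n // e.1 < e.2}

/-- An outcome of the random graph on `[n]`: a choice of which potential edges are present. -/
abbrev Sample (n : ℕ) := EdgeIdx n → Bool

/-- Adjacency of two vertices (described by their values in `Fin n`) in the outcome `ω`. -/
def adjVal {n : ℕ} (ω : Sample n) (a b : ℕ) : Prop :=
  ∃ e : EdgeIdx n, ω e = true ∧
    ((e.1.1.val = a ∧ e.1.2.val = b) ∨ (e.1.1.val = b ∧ e.1.2.val = a))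

/-- Adjacency of two vertices in the outcome `ω`. -/
def sampleAdj {n : ℕ} (ω : Sample n) (v w : Fin n) : Prop := adjVal ω v.val w.val

/-- The probability of the outcome `ω` in the model `G(n, p̄)`: each pair of distinct
vertices at distance `d` is an edge with probability `p d`, independently.  (The value `p 0` is
never used, since distinct vertices are at distance at least 1.) -/
noncomputable def sampleWeight (p : ℕ → ℝ) {n : ℕ} (ω : Sample n) : ℝ :=
  ∏ e : EdgeIdx n,
    (if ω e then p (e.1.2.val - e.1.1.val) else 1 - p (e.1.2.val - e.1.1.val))

/-- The probability of the outcome `ω` in the circular model `C(n, p̄)`: vertices `v, w` are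
adjacent with probability `p (min |v-w| (n - |v-w|))`, independently. -/
noncomputable def cWeight (p : ℕ → ℝ) {n : ℕ} (ω : Sample n) : ℝ :=
  ∏ e : EdgeIdx n,
    (if ω e then p (min (e.1.2.val - e.1.1.val) (n - (e.1.2.val - e.1.1.val)))
      else 1 - p (min (e.1.2.val - e.1.1.val) (n - (e.1.2.val - e.1.1.val))))

open scoped Classical in
/-- The probability of the event `P` in the random graph `G(n, p̄)`. -/
noncomputable def Pr (p : ℕ → ℝ) (n : ℕ) (P : Sample n → Prop) : ℝ :=
  ∑ ω : Sample n, if P ω then sampleWeight p ω else 0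

open scoped Classical in
/-- The probability of the event `P` in the circular random graph `C(n, p̄)`. -/
noncomputable def cPr (p : ℕ → ℝ) (n : ℕ) (P : Sample n → Prop) : ℝ :=
  ∑ ω : Sample n, if P ω then cWeight p ω else 0

/-! ### The language `L` of graphs (also used as the language `L^c`) -/

/-- An outcome `ω` of the random graph, viewed as a structure of `FirstOrder.Language.graph`,
the language with a single binary adjacency predicate. -/
def graphStructure {n : ℕ} (ω : Sample n) : Language.graph.Structure (Fin n) where
  RelMap | .adj => fun x => sampleAdj ω (x 0) (x 1)

/-- Satisfaction of a sentence of the language `L` in the outcome `ω`. -/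
def SatL {n : ℕ} (ω : Sample n) (ψ : Language.graph.Sentence) : Prop :=
  @Language.Sentence.Realize _ _ (graphStructure ω) ψ

/-- `Prob(n, p̄; ψ)` for a sentence `ψ` of the language `L`. -/
noncomputable def ProbL (p : ℕ → ℝ) (n : ℕ) (ψ : Language.graph.Sentence) : ℝ :=
  Pr p n fun ω => SatL ω ψ

/-- The probability that `C(n, p̄)` satisfies a sentence `ψ` of the language `L^c = L`. -/
noncomputable def cProbL (p : ℕ → ℝ) (n : ℕ) (ψ : Language.graph.Sentence) : ℝ :=
  cPr p n fun ω => SatL ω ψ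

/-! ### The language `L₊` -/

/-- The constants of the language `L₊`: the first element `1` and the last element `n`. -/
inductive plusFunc : ℕ → Type
  | one : plusFunc 0
  | last : plusFunc 0

/-- The relations of `L₊`: adjacency and successor. -/
inductive plusRel : ℕ → Type
  | adj : plusRel 2
  | succ : plusRel 2

/-- The language `L₊` with adjacency, successor (`x = y + 1`), and constants `1` and `n`. -/
def Lplus : Language := ⟨plusFunc, plusRel⟩

/-- An outcome `ω` of the random graph on `[m+1]`, as an `L₊`-structure. -/
def plusStructure {m : ℕ} (ω : Sample (m + 1)) : Lplus.Structure (Fin (m + 1)) where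
  funMap | .one => fun _ => 0 | .last => fun _ => Fin.last m
  RelMap
    | .adj => fun x => sampleAdj ω (x 0) (x 1)
    | .succ => fun x => (x 0).val = (x 1).val + 1

/-- `Prob(n, p̄; ψ)` for a sentence `ψ` of `L₊` (set to `0` in the irrelevant case `n = 0`,
where the constants cannot be interpreted). -/
noncomputable def ProbPlus (p : ℕ → ℝ) : ℕ → Lplus.Sentence → ℝ
  | 0, _ => 0
  | (m + 1), ψ => Pr p (m + 1) fun ω => @Language.Sentence.Realize _ _ (plusStructure ω) ψ

/-! ### The language `L≤` -/

/-- The relations of `L≤`: adjacency and linear order. -/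
inductive leRel : ℕ → Type
  | adj : leRel 2
  | le : leRel 2

/-- The language `L≤` with adjacency and a linear order. -/
def Lle : Language := ⟨fun _ => Empty, leRel⟩

/-- An outcome `ω` of the random graph on `[n]`, as an `L≤`-structure. -/
def leStructure {n : ℕ} (ω : Sample n) : Lle.Structure (Fin n) where
  funMap := fun f _ => Empty.elim f
  RelMap
    | .adj => fun x => sampleAdj ω (x 0) (x 1)
    | .le => fun x => x 0 ≤ x 1

/-- Satisfaction of a sentence of `L≤` in the outcome `ω`. -/
def SatLe {n : ℕ} (ω : Sample n) (ψ : Lle.Sentence) : Prop :=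
  @Language.Sentence.Realize _ _ (leStructure ω) ψ

/-- `Prob(n, p̄; ψ)` for a sentence `ψ` of `L≤`. -/
noncomputable def ProbLe (p : ℕ → ℝ) (n : ℕ) (ψ : Lle.Sentence) : ℝ :=
  Pr p n fun ω => SatLe ω ψ

/-! ### The circular languages `L₊^c` and `L≤^c` -/

/-- The relations of `L₊^c`: adjacency and cyclic successor. -/
inductive plusCRel : ℕ → Type
  | adj : plusCRel 2
  | succ : plusCRel 2

/-- The language `L₊^c`, with adjacency and cyclic successor (`x = y + 1 (mod n)`). -/
def LplusC : Language := ⟨fun _ => Empty, plusCRel⟩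

/-- An outcome `ω` of the circular random graph on `[n]`, as an `L₊^c`-structure. -/
def plusCStructure {n : ℕ} (ω : Sample n) : LplusC.Structure (Fin n) where
  funMap := fun f _ => Empty.elim f
  RelMap
    | .adj => fun x => sampleAdj ω (x 0) (x 1)
    | .succ => fun x => (x 0).val = ((x 1).val + 1) % n

/-- The probability that `C(n, p̄)` satisfies a sentence `ψ` of the language `L₊^c`. -/
noncomputable def cProbPlus (p : ℕ → ℝ) (n : ℕ) (ψ : LplusC.Sentence) : ℝ :=
  cPr p n fun ω => @Language.Sentence.Realize _ _ (plusCStructure ω) ψ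

/-- The relations of `L≤^c`: adjacency and the ternary clockwise-order predicate. -/
inductive cycRel : ℕ → Type
  | adj : cycRel 2
  | btw : cycRel 3

/-- The language `L≤^c`, with adjacency and the ternary clockwise-order predicate `C`. -/
def Lcyc : Language := ⟨fun _ => Empty, cycRel⟩

/-- `C(a, b, c)`: `a ≤ b ≤ c` holds after some cyclic permutation of `(a, b, c)`. -/
def cyclicBtw {n : ℕ} (a b c : Fin n) : Prop :=
  (a ≤ b ∧ b ≤ c) ∨ (b ≤ c ∧ c ≤ a) ∨ (c ≤ a ∧ a ≤ b)

/-- An outcome `ω` of the circular random graph on `[n]`, as an `L≤^c`-structure. -/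
def cycStructure {n : ℕ} (ω : Sample n) : Lcyc.Structure (Fin n) where
  funMap := fun f _ => Empty.elim f
  RelMap
    | .adj => fun x => sampleAdj ω (x 0) (x 1)
    | .btw => fun x => cyclicBtw (x 0) (x 1) (x 2)

/-- Satisfaction of a sentence of `L≤^c` in the outcome `ω`. -/
def SatCyc {n : ℕ} (ω : Sample n) (ψ : Lcyc.Sentence) : Prop :=
  @Language.Sentence.Realize _ _ (cycStructure ω) ψ

/-- The probability that `C(n, p̄)` satisfies a sentence `ψ` of the language `L≤^c`. -/
noncomputable def cProbCyc (p : ℕ → ℝ) (n : ℕ) (ψ : Lcyc.Sentence) : ℝ :=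
  cPr p n fun ω => SatCyc ω ψ


/-- The quantifier depth of a first-order formula. -/
def qDepth {L : Language} {α : Type} : ∀ {n : ℕ}, L.BoundedFormula α n → ℕ
  | _, .falsum => 0
  | _, .equal _ _ => 0
  | _, .rel _ _ => 0
  | _, .imp f g => max (qDepth f) (qDepth g)
  | _, .all f => qDepth f + 1

/-!
A finite initial segment of `ℕ`, together with all binary relations on it, can be coded inside a
finite graph with a distinguished hub. If a graph `G` contains an induced copy of this coding graph
whose hub has no neighbours outside the copy, then four vertices of `G` serve as parameters with
which graph formulas quantify over numbers and over binary relations between numbers. Evaluation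
of a partial recursive code `c` is thereby expressible, and "`c` halts on input `j` with a value
among the coded numbers" is a sentence of depth at most `D + j`, with `D` depending only on `c`.
It forces the order of the graph to exceed the value `c(j)`.

If `∏_{i ≤ n} (1 - p i) = n ^ o(1)`, then every finite graph `H` with a distinguished vertex has
such a closed copy asymptotically almost surely. Cut the vertices into about `n / h` blocks of
length `h = |H|`: each carries a closed copy with probability at least a constant times
`(∏ (1 - p i)) ^ 2`, and the only potential edge relevant to two blocks joins their hubs, so the
second moment method applies.

Finally, `ψ_k` with `k = 2 j` is made to outgrow the code of index `j.unpair.1` on input `j`. As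
every code has inputs `j ≥ D` reserved for it, the depth `D + j ≤ 2 j` is available.
-/

/-! ### Uniform definability in graphs -/

/-- A property, uniform in the graph, of `m` vertices relative to `r` parameters. The parameters
become the free variables of a defining formula and the `m` vertices its de Bruijn variables. -/
abbrev GraphProperty (r m : ℕ) :=
  ∀ V : Type, SimpleGraph V → (Fin r → V) → (Fin m → V) → Prop

/-- A graph property is definable at depth `d` if a single formula of quantifier depth at most `d`
defines it in every graph. -/
def DefinableAtDepth {r m : ℕ} (d : ℕ) (P : GraphProperty r m) : Prop :=
  ∃ φ : Language.graph.BoundedFormula (Fin r) m, qDepth φ ≤ d ∧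
    ∀ (V : Type) (G : SimpleGraph V) (π : Fin r → V) (xs : Fin m → V),
      @Language.BoundedFormula.Realize _ V G.structure _ _ φ π xs ↔ P V G π xs

namespace DefinableAtDepth

variable {r m d : ℕ} {P Q : GraphProperty r m}

theorem mono {d' : ℕ} (hP : DefinableAtDepth d P) (hd : d ≤ d') : DefinableAtDepth d' P :=
  let ⟨φ, hφd, hφ⟩ := hP
  ⟨φ, hφd.trans hd, hφ⟩

theorem congr (hP : DefinableAtDepth d P) (h : ∀ V G π xs, P V G π xs ↔ Q V G π xs) :
    DefinableAtDepth d Q :=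
  let ⟨φ, hφd, hφ⟩ := hP
  ⟨φ, hφd, fun V G π xs => (hφ V G π xs).trans (h V G π xs)⟩

theorem adj (i j : Fin m) :
    DefinableAtDepth d (fun _ G (_ : Fin r → _) xs => G.Adj (xs i) (xs j)) :=
  ⟨.rel Language.graphRel.adj ![.var (.inr i), .var (.inr j)], Nat.zero_le d,
    fun _ _ _ _ => Iff.rfl⟩

theorem adj_param (i : Fin r) (j : Fin m) :
    DefinableAtDepth d (fun _ G π xs => G.Adj (π i) (xs j)) :=
  ⟨.rel Language.graphRel.adj ![.var (.inl i), .var (.inr j)], Nat.zero_le d,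
    fun _ _ _ _ => Iff.rfl⟩

theorem eq (i j : Fin m) :
    DefinableAtDepth d (fun _ _ (_ : Fin r → _) xs => xs i = xs j) :=
  ⟨.equal (.var (.inr i)) (.var (.inr j)), Nat.zero_le d, fun _ _ _ _ => Iff.rfl⟩

theorem imp (hP : DefinableAtDepth d P) (hQ : DefinableAtDepth d Q) :
    DefinableAtDepth d (fun V G π xs => P V G π xs → Q V G π xs) :=
  let ⟨φ, hφd, hφ⟩ := hP
  let ⟨χ, hχd, hχ⟩ := hQ
  ⟨.imp φ χ, max_le hφd hχd, fun V G π xs => imp_congr (hφ V G π xs) (hχ V G π xs)⟩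

theorem not (hP : DefinableAtDepth d P) : DefinableAtDepth d (fun V G π xs => ¬ P V G π xs) :=
  hP.imp ⟨.falsum, Nat.zero_le d, fun _ _ _ _ => Iff.rfl⟩

theorem and (hP : DefinableAtDepth d P) (hQ : DefinableAtDepth d Q) :
    DefinableAtDepth d (fun V G π xs => P V G π xs ∧ Q V G π xs) :=
  (hP.imp hQ.not).not.congr fun _ _ _ _ => by tauto

theorem or (hP : DefinableAtDepth d P) (hQ : DefinableAtDepth d Q) :
    DefinableAtDepth d (fun V G π xs => P V G π xs ∨ Q V G π xs) :=
  (hP.not.imp hQ).congr fun _ _ _ _ => or_iff_not_imp_left.symm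

variable {R : ∀ V : Type, SimpleGraph V → (Fin r → V) → (Fin m → V) → V → Prop}

theorem all
    (h : DefinableAtDepth d
      (fun V G π xs => R V G π (fun i => xs i.castSucc) (xs (Fin.last m)))) :
    DefinableAtDepth (d + 1) (fun V G π xs => ∀ a, R V G π xs a) := by
  obtain ⟨φ, hφd, hφ⟩ := h
  refine ⟨.all φ, Nat.succ_le_succ hφd, fun V G π xs => forall_congr' fun a => ?_⟩
  simpa only [Fin.snoc_castSucc, Fin.snoc_last] using hφ V G π (Fin.snoc xs a)

theorem ex
    (h : DefinableAtDepth d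
      (fun V G π xs => R V G π (fun i => xs i.castSucc) (xs (Fin.last m)))) :
    DefinableAtDepth (d + 1) (fun V G π xs => ∃ a, R V G π xs a) :=
  (all (R := fun V G π xs a => ¬ R V G π xs a) h.not).not.congr
    fun _ _ _ _ => not_forall_not

end DefinableAtDepth

section qDepth

variable {L : Language} {α β : Type}

theorem qDepth_castLE {m n : ℕ} (h : m ≤ n) (φ : L.BoundedFormula α m) :
    qDepth (φ.castLE h) = qDepth φ := by
  induction φ generalizing n with
  | falsum | equal | rel => rfl
  | imp φ χ ihφ ihχ => exact congrArg₂ max (ihφ h) (ihχ h)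
  | all φ ih => exact congrArg (· + 1) (ih _)

theorem qDepth_relabel {m n : ℕ} (g : α → β ⊕ Fin n) (φ : L.BoundedFormula α m) :
    qDepth (φ.relabel g) = qDepth φ := by
  induction φ with
  | falsum | equal | rel => rfl
  | imp φ χ ihφ ihχ => exact congrArg₂ max ihφ ihχ
  | all φ ih => exact congrArg (· + 1) ((qDepth_castLE _ _).trans ih)

theorem qDepth_exs : ∀ {n : ℕ} (φ : L.BoundedFormula α n), qDepth φ.exs = n + qDepth φ
  | 0, φ => (Nat.zero_add _).symm
  | n + 1, φ => by
    rw [Language.BoundedFormula.exs, qDepth_exs]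
    simp only [qDepth]
    omega

end qDepth

theorem DefinableAtDepth.exists_sentence {r d : ℕ} {P : GraphProperty r 0}
    (hP : DefinableAtDepth d P) :
    ∃ φ : Language.graph.Sentence, qDepth φ ≤ r + d ∧
      ∀ (V : Type) (G : SimpleGraph V),
        @Language.Sentence.Realize _ V G.structure φ ↔ ∃ π, P V G π default := by
  obtain ⟨φ, hφd, hφ⟩ := hP
  refine ⟨(φ.relabel Sum.inr : Language.graph.BoundedFormula Empty (r + 0)).exs, ?_,
    fun V G => ?_⟩
  · rw [qDepth_exs, qDepth_relabel]
    omega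
  · let _ := G.structure
    refine Language.BoundedFormula.realize_exs.trans (exists_congr fun π => ?_)
    exact (Language.Formula.realize_relabel_sumInr φ).trans (hφ V G π default)

/-! ### Number structures and the evaluation of codes -/

open Nat.Partrec (Code)

/-- An initial segment of `ℕ` inside `V`: a set of numbers, an ordering of them, and, for every
`A : V`, the binary relation `rel A` that `A` names. Naming relations by elements is what lets
first-order formulas quantify over (some) binary relations. -/
structure NumberStructure (V : Type) where
  num : Set V
  lt : V → V → Prop
  rel : V → V → V → Prop

namespace NumberStructure

variable {V : Type} (S : NumberStructure V)

/-- `x` is the least number. -/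
def IsZero (x : V) : Prop := ∀ z ∈ S.num, ¬ S.lt z x

/-- `y` is the immediate successor of `x`. -/
def IsSucc (x y : V) : Prop := S.lt x y ∧ ∀ z ∈ S.num, ¬ (S.lt x z ∧ S.lt z y)

/-- `lt` is a strict linear order on the numbers. -/
def IsLinear : Prop :=
  (∀ x ∈ S.num, ¬ S.lt x x) ∧
  (∀ x ∈ S.num, ∀ y ∈ S.num, ∀ z ∈ S.num, S.lt x y → S.lt y z → S.lt x z) ∧
  (∀ x ∈ S.num, ∀ y ∈ S.num, S.lt x y ∨ x = y ∨ S.lt y x)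

/-- The pair following `(a', b')` in the enumeration of pairs by `Nat.pair` is `(a, b)`. -/
def PairStep (a' b' a b : V) : Prop :=
  (S.lt a' b' ∧ S.IsSucc a' a ∧ S.lt a b' ∧ b = b') ∨
  (S.IsSucc a' b' ∧ a = b' ∧ S.IsZero b) ∨
  (S.lt b' a' ∧ a = a' ∧ S.IsSucc b' b) ∨
  (a' = b' ∧ S.IsZero a ∧ S.IsSucc a' b)

/-- `P` and `Q` name the graphs of the components of `Nat.unpair`, on a set of arguments closed
under predecessors. -/
def IsUnpairing (P Q : V) : Prop :=
  ∀ c ∈ S.num, ∀ a ∈ S.num, ∀ b ∈ S.num, S.rel P c a → S.rel Q c b →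
    (S.IsZero c ∧ S.IsZero a ∧ S.IsZero b) ∨
    ∃ c' ∈ S.num, ∃ a' ∈ S.num, ∃ b' ∈ S.num,
      S.IsSucc c' c ∧ S.rel P c' a' ∧ S.rel Q c' b' ∧ S.PairStep a' b' a b

/-- `c = Nat.pair a b`. -/
def IsPair (c a b : V) : Prop :=
  ∃ P, ∃ Q, S.IsUnpairing P Q ∧ S.rel P c a ∧ S.rel Q c b

/-- `y` is a value at `(a, n)`, where `n` is a successor, of the function defined by primitive
recursion with step `g`, according to the table of earlier values named by `R`. -/
def IsPrecStep (g : V → V → Prop) (R a n y : V) : Prop :=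
  ∃ m ∈ S.num, S.IsSucc m n ∧ ∃ x ∈ S.num, S.IsPair x a m ∧ ∃ i ∈ S.num, S.rel R x i ∧
    ∃ q ∈ S.num, S.IsPair q m i ∧ ∃ t ∈ S.num, S.IsPair t a q ∧ g t y

/-- `R` names a table of values of the function defined by primitive recursion from `f` and `g`
which contains with each entry the entries it is computed from. -/
def IsPrecTable (f g : V → V → Prop) (R : V) : Prop :=
  ∀ x ∈ S.num, ∀ y ∈ S.num, S.rel R x y →
    ∃ a ∈ S.num, ∃ n ∈ S.num, S.IsPair x a n ∧
      ((S.IsZero n ∧ f a y) ∨ S.IsPrecStep g R a n y)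

/-- Some value of `f` at `Nat.pair a t` satisfies `P`. -/
def HasValue (f : V → V → Prop) (P : V → Prop) (a t : V) : Prop :=
  ∃ q ∈ S.num, S.IsPair q a t ∧ ∃ z ∈ S.num, P z ∧ f q z

/-- The code evaluates to `y` on input `x`, with a computation bounded by the numbers of `S`. -/
def Eval : Code → V → V → Prop
  | .zero, _, y => S.IsZero y
  | .succ, x, y => S.IsSucc x y
  | .left, x, y => ∃ b ∈ S.num, S.IsPair x y b
  | .right, x, y => ∃ a ∈ S.num, S.IsPair x a y
  | .pair f g, x, y => ∃ a ∈ S.num, ∃ b ∈ S.num, Eval f x a ∧ Eval g x b ∧ S.IsPair y a b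
  | .comp f g, x, y => ∃ z ∈ S.num, Eval g x z ∧ Eval f z y
  | .prec f g, x, y => ∃ R, S.IsPrecTable (Eval f) (Eval g) R ∧ S.rel R x y
  | .rfind' f, x, y => ∃ a ∈ S.num, ∃ m ∈ S.num, S.IsPair x a m ∧ ¬ S.lt y m ∧
      S.HasValue (Eval f) S.IsZero a y ∧
      ∀ t ∈ S.num, ¬ S.lt t m → S.lt t y → S.HasValue (Eval f) (fun z => ¬ S.IsZero z) a t

end NumberStructure

/-- The number structure coded in a graph by four parameters. The numbers are the common neighbours
of the hub `π 0` and the marker `π 1`; a pair `(x, y)` belongs to the relation named by `A` if there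
is a path `x, a, b, y` through neighbours of the hub whose first inner vertex is adjacent to `A` and
whose second inner vertex is adjacent to the marker `π 2`; the order is the relation named by
`π 3`. -/
def codedNumbers {V : Type} (G : SimpleGraph V) (π : Fin 4 → V) : NumberStructure V :=
  let rel (A x y : V) : Prop := ∃ a, ∃ b, G.Adj (π 0) a ∧ G.Adj (π 0) b ∧
    G.Adj A a ∧ G.Adj (π 2) b ∧ G.Adj x a ∧ G.Adj a b ∧ G.Adj b y
  { num := {x | G.Adj (π 0) x ∧ G.Adj (π 1) x}
    lt := rel (π 3)
    rel := rel }

/-! ### Definability of evaluation -/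

section Definability

open DefinableAtDepth

variable {m d : ℕ}

theorem definable_mem_num (x : Fin m) :
    DefinableAtDepth d (fun _ G π xs => xs x ∈ (codedNumbers G π).num) :=
  (adj_param 0 x).and (adj_param 1 x)

section BoundedQuantifiers

variable {R : ∀ V : Type, SimpleGraph V → (Fin 4 → V) → (Fin m → V) → V → Prop}

theorem definable_exists_mem_num
    (h : DefinableAtDepth d
      (fun V G π xs => R V G π (fun i => xs i.castSucc) (xs (Fin.last m)))) :
    DefinableAtDepth (d + 1) (fun V G π xs => ∃ a ∈ (codedNumbers G π).num, R V G π xs a) :=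
  ex ((definable_mem_num _).and h)

theorem definable_forall_mem_num
    (h : DefinableAtDepth d
      (fun V G π xs => R V G π (fun i => xs i.castSucc) (xs (Fin.last m)))) :
    DefinableAtDepth (d + 1) (fun V G π xs => ∀ a ∈ (codedNumbers G π).num, R V G π xs a) :=
  all ((definable_mem_num _).imp h)

end BoundedQuantifiers

theorem definable_rel (A x y : Fin m) :
    DefinableAtDepth (d + 2) (fun _ G π xs => (codedNumbers G π).rel (xs A) (xs x) (xs y)) :=
  ex <| ex <| (adj_param 0 _).and <| (adj_param 0 _).and <| (adj _ _).and <|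
    (adj_param 2 _).and <| (adj _ _).and <| (adj _ _).and (adj _ _)

theorem definable_lt (x y : Fin m) :
    DefinableAtDepth (d + 2) (fun _ G π xs => (codedNumbers G π).lt (xs x) (xs y)) :=
  ex <| ex <| (adj_param 0 _).and <| (adj_param 0 _).and <| (adj_param 3 _).and <|
    (adj_param 2 _).and <| (adj _ _).and <| (adj _ _).and (adj _ _)

theorem definable_isLinear :
    DefinableAtDepth (d + 5) (fun _ G π (_ : Fin m → _) => (codedNumbers G π).IsLinear) :=
  (definable_forall_mem_num (definable_lt _ _).not).and <|
    (definable_forall_mem_num <| definable_forall_mem_num <| definable_forall_mem_num <|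
      (definable_lt _ _).imp <| (definable_lt _ _).imp (definable_lt _ _)).and <|
    definable_forall_mem_num <| definable_forall_mem_num <|
      (definable_lt _ _).or <| (DefinableAtDepth.eq _ _).or (definable_lt _ _)

theorem definable_isZero (x : Fin m) :
    DefinableAtDepth (d + 3) (fun _ G π xs => (codedNumbers G π).IsZero (xs x)) :=
  definable_forall_mem_num (definable_lt _ _).not

theorem definable_isSucc (x y : Fin m) :
    DefinableAtDepth (d + 3) (fun _ G π xs => (codedNumbers G π).IsSucc (xs x) (xs y)) :=
  (definable_lt _ _).and <|
    definable_forall_mem_num ((definable_lt _ _).and (definable_lt _ _)).not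

theorem definable_pairStep (a' b' a b : Fin m) :
    DefinableAtDepth (d + 3)
      (fun _ G π xs => (codedNumbers G π).PairStep (xs a') (xs b') (xs a) (xs b)) :=
  ((definable_lt _ _).and <| (definable_isSucc _ _).and <|
    (definable_lt _ _).and (DefinableAtDepth.eq _ _)).or <|
  ((definable_isSucc _ _).and <| (DefinableAtDepth.eq _ _).and (definable_isZero _)).or <|
  ((definable_lt _ _).and <| (DefinableAtDepth.eq _ _).and (definable_isSucc _ _)).or <|
  (DefinableAtDepth.eq _ _).and <| (definable_isZero _).and (definable_isSucc _ _)

theorem definable_isUnpairing (P Q : Fin m) :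
    DefinableAtDepth (d + 9) (fun _ G π xs => (codedNumbers G π).IsUnpairing (xs P) (xs Q)) :=
  definable_forall_mem_num <| definable_forall_mem_num <| definable_forall_mem_num <|
    (definable_rel _ _ _).imp <| (definable_rel _ _ _).imp <|
    ((definable_isZero _).and <| (definable_isZero _).and (definable_isZero _)).or <|
    definable_exists_mem_num <| definable_exists_mem_num <| definable_exists_mem_num <|
    (definable_isSucc _ _).and <| (definable_rel _ _ _).and <| (definable_rel _ _ _).and
    (definable_pairStep _ _ _ _)

theorem definable_isPair (c a b : Fin m) :
    DefinableAtDepth (d + 11)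
      (fun _ G π xs => (codedNumbers G π).IsPair (xs c) (xs a) (xs b)) :=
  ex <| ex <| (definable_isUnpairing _ _).and <| (definable_rel _ _ _).and (definable_rel _ _ _)

/-- Evaluation of the code is definable at depth `d`, whatever other variables are around. -/
def EvalDefinable (c : Code) (d : ℕ) : Prop :=
  ∀ (m : ℕ) (x y : Fin m),
    DefinableAtDepth d (fun _ G π xs => (codedNumbers G π).Eval c (xs x) (xs y))

namespace EvalDefinable

variable {f g : Code}

theorem mono {d' : ℕ} (hf : EvalDefinable f d) (hd : d ≤ d') : EvalDefinable f d' :=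
  fun m x y => (hf m x y).mono hd

theorem zero : EvalDefinable .zero (d + 3) := fun _ _ y => definable_isZero y

theorem succ : EvalDefinable .succ (d + 3) := fun _ x y => definable_isSucc x y

theorem left : EvalDefinable .left (d + 12) :=
  fun _ _ _ => definable_exists_mem_num (definable_isPair _ _ _)

theorem right : EvalDefinable .right (d + 12) :=
  fun _ _ _ => definable_exists_mem_num (definable_isPair _ _ _)

theorem pair (hf : EvalDefinable f d) (hg : EvalDefinable g d) :
    EvalDefinable (.pair f g) (d + 13) :=
  fun _ _ _ => definable_exists_mem_num <| definable_exists_mem_num <|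
    (hf.mono (by omega) _ _ _).and <| (hg.mono (by omega) _ _ _).and (definable_isPair _ _ _)

theorem comp (hf : EvalDefinable f d) (hg : EvalDefinable g d) :
    EvalDefinable (.comp f g) (d + 1) :=
  fun _ _ _ => definable_exists_mem_num ((hg _ _ _).and (hf _ _ _))

theorem isPrecStep (hg : EvalDefinable g d) (R a n y : Fin m) :
    DefinableAtDepth (d + 16) (fun _ G π xs =>
      (codedNumbers G π).IsPrecStep ((codedNumbers G π).Eval g) (xs R) (xs a) (xs n) (xs y)) :=
  definable_exists_mem_num <| (definable_isSucc _ _).and <|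
    definable_exists_mem_num <| (definable_isPair _ _ _).and <|
    definable_exists_mem_num <| (definable_rel _ _ _).and <|
    definable_exists_mem_num <| (definable_isPair _ _ _).and <|
    definable_exists_mem_num <| (definable_isPair _ _ _).and (hg.mono (by omega) _ _ _)

theorem prec (hf : EvalDefinable f d) (hg : EvalDefinable g d) :
    EvalDefinable (.prec f g) (d + 21) :=
  fun _ _ _ => ex <| .and
    (definable_forall_mem_num <| definable_forall_mem_num <| (definable_rel _ _ _).imp <|
      definable_exists_mem_num <| definable_exists_mem_num <| (definable_isPair _ _ _).and <|
      ((definable_isZero _).and (hf.mono (by omega) _ _ _)).or (hg.isPrecStep _ _ _ _))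
    (definable_rel _ _ _)

theorem rfind (hf : EvalDefinable f d) : EvalDefinable (.rfind' f) (d + 16) :=
  fun _ _ _ => definable_exists_mem_num <| definable_exists_mem_num <|
    (definable_isPair _ _ _).and <| (definable_lt _ _).not.and <| .and
    (definable_exists_mem_num <| (definable_isPair _ _ _).and <|
      definable_exists_mem_num <| (definable_isZero _).and (hf.mono (by omega) _ _ _)) <|
    definable_forall_mem_num <| (definable_lt _ _).not.imp <| (definable_lt _ _).imp <|
    definable_exists_mem_num <| (definable_isPair _ _ _).and <|
    definable_exists_mem_num <| (definable_isZero _).not.and (hf.mono (by omega) _ _ _)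

theorem const : ∀ n : ℕ, EvalDefinable (Code.const n) (n + 3)
  | 0 => zero
  | n + 1 => succ.comp (const n)

theorem comp_const (hf : EvalDefinable f d) (n : ℕ) :
    EvalDefinable (f.comp (Code.const n)) (d + n + 4) :=
  (hf.mono (by omega)).comp ((const n).mono (by omega : n + 3 ≤ d + n + 3))

end EvalDefinable

theorem exists_evalDefinable (c : Code) : ∃ d, EvalDefinable c d := by
  have common {f g : Code} : (∃ d, EvalDefinable f d) → (∃ d, EvalDefinable g d) →
      ∃ d, EvalDefinable f d ∧ EvalDefinable g d := fun ⟨d₁, hf⟩ ⟨d₂, hg⟩ =>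
    ⟨max d₁ d₂, hf.mono (le_max_left _ _), hg.mono (le_max_right _ _)⟩
  induction c with
  | zero => exact ⟨_, EvalDefinable.zero (d := 0)⟩
  | succ => exact ⟨_, EvalDefinable.succ (d := 0)⟩
  | left => exact ⟨_, EvalDefinable.left (d := 0)⟩
  | right => exact ⟨_, EvalDefinable.right (d := 0)⟩
  | pair f g hf hg => exact let ⟨_, hf, hg⟩ := common hf hg; ⟨_, hf.pair hg⟩
  | comp f g hf hg => exact let ⟨_, hf, hg⟩ := common hf hg; ⟨_, hf.comp hg⟩
  | prec f g hf hg => exact let ⟨_, hf, hg⟩ := common hf hg; ⟨_, hf.prec hg⟩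
  | rfind' f hf => exact let ⟨_, hf⟩ := hf; ⟨_, hf.rfind⟩

end Definability

/-! ### Membership in the values of a code -/

theorem mem_eval_pair {f g : Code} {x y : ℕ} :
    y ∈ (Code.pair f g).eval x ↔ ∃ a ∈ f.eval x, ∃ b ∈ g.eval x, Nat.pair a b = y := by
  simp [Code.eval, Seq.seq]

theorem mem_eval_comp {f g : Code} {x y : ℕ} :
    y ∈ (Code.comp f g).eval x ↔ ∃ z ∈ g.eval x, y ∈ f.eval z :=
  Part.mem_bind_iff

theorem mem_eval_prec_succ {f g : Code} {a n y : ℕ} :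
    y ∈ (Code.prec f g).eval (Nat.pair a (n + 1)) ↔
      ∃ i ∈ (Code.prec f g).eval (Nat.pair a n), y ∈ g.eval (Nat.pair a (Nat.pair n i)) := by
  rw [Code.eval_prec_succ]
  exact Part.mem_bind_iff

theorem mem_eval_rfind {f : Code} {a m y : ℕ} :
    y ∈ (Code.rfind' f).eval (Nat.pair a m) ↔ m ≤ y ∧ 0 ∈ f.eval (Nat.pair a y) ∧
      ∀ t, m ≤ t → t < y → ∃ z ∈ f.eval (Nat.pair a t), z ≠ 0 := by
  have hmem : y ∈ (Code.rfind' f).eval (Nat.pair a m) ↔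
      ∃ k, (0 ∈ f.eval (Nat.pair a (k + m)) ∧
        ∀ {j : ℕ}, j < k → ∃ z ∈ f.eval (Nat.pair a (j + m)), z ≠ 0) ∧ k + m = y := by
    simp only [Code.eval, Nat.unpaired, Nat.unpair_pair]
    refine (Part.mem_map_iff _).trans (exists_congr fun k => and_congr_left' ?_)
    refine Nat.mem_rfind.trans ?_
    simp [Part.mem_map_iff]
  rw [hmem]
  constructor
  · rintro ⟨k, ⟨hzero, hlt⟩, rfl⟩
    refine ⟨Nat.le_add_left m k, hzero, fun t hmt htk => ?_⟩
    obtain ⟨z, hz, hz0⟩ := @hlt (t - m) (by omega)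
    exact ⟨z, by rwa [Nat.sub_add_cancel hmt] at hz, hz0⟩
  · rintro ⟨hmy, hzero, hlt⟩
    refine ⟨y - m, ⟨by rwa [Nat.sub_add_cancel hmy], fun {k} hk => ?_⟩, by omega⟩
    exact hlt (k + m) (by omega) (by omega)

theorem exists_trace_of_mem_eval_prec {f g : Code} {a n y : ℕ}
    (hy : y ∈ (Code.prec f g).eval (Nat.pair a n)) :
    ∃ s : ℕ → ℕ, s n = y ∧ s 0 ∈ f.eval a ∧
      ∀ m < n, s (m + 1) ∈ g.eval (Nat.pair a (Nat.pair m (s m))) := by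
  induction n generalizing y with
  | zero =>
    rw [Code.eval_prec_zero] at hy
    exact ⟨fun _ => y, rfl, hy, fun m hm => absurd hm m.not_lt_zero⟩
  | succ n ih =>
    obtain ⟨i, hi, hy⟩ := mem_eval_prec_succ.1 hy
    obtain ⟨s, rfl, hs0, hs⟩ := ih hi
    refine ⟨Function.update s (n + 1) y, Function.update_self .., ?_, fun m hm => ?_⟩
    · rwa [Function.update_of_ne (by omega)]
    · rcases Nat.lt_succ_iff_lt_or_eq.1 hm with hmn | rfl
      · rw [Function.update_of_ne (by omega), Function.update_of_ne (by omega)]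
        exact hs m hmn
      · rwa [Function.update_self, Function.update_of_ne (by omega)]

theorem pair_eq_pair_add_one_iff {a' b' a b : ℕ} :
    Nat.pair a b = Nat.pair a' b' + 1 ↔
      (a' < b' ∧ a = a' + 1 ∧ a < b' ∧ b = b') ∨ (b' = a' + 1 ∧ a = b' ∧ b = 0) ∨
      (b' < a' ∧ a = a' ∧ b = b' + 1) ∨ (a' = b' ∧ a = 0 ∧ b = a' + 1) := by
  have step {a b : ℕ} (h : (a' < b' ∧ a = a' + 1 ∧ a < b' ∧ b = b') ∨
      (b' = a' + 1 ∧ a = b' ∧ b = 0) ∨ (b' < a' ∧ a = a' ∧ b = b' + 1) ∨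
      (a' = b' ∧ a = 0 ∧ b = a' + 1)) : Nat.pair a b = Nat.pair a' b' + 1 := by
    unfold Nat.pair
    rcases h with ⟨h, rfl, h', rfl⟩ | ⟨rfl, rfl, rfl⟩ | ⟨h, rfl, rfl⟩ | ⟨rfl, rfl, rfl⟩ <;>
      split_ifs <;> first | omega | ring
  refine ⟨fun h => ?_, step⟩
  have unique {a₁ b₁ : ℕ} (h₁ : Nat.pair a₁ b₁ = Nat.pair a' b' + 1) : a = a₁ ∧ b = b₁ :=
    Nat.pair_eq_pair.1 (h.trans h₁.symm)
  rcases lt_trichotomy a' b' with hlt | rfl | hlt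
  · rcases (Nat.succ_le_of_lt hlt).lt_or_eq with hlt' | rfl
    · have := unique (step (.inl ⟨hlt, rfl, hlt', rfl⟩))
      omega
    · have := unique (step (.inr (.inl ⟨rfl, rfl, rfl⟩)))
      omega
  · have := unique (step (.inr (.inr (.inr ⟨rfl, rfl, rfl⟩))))
    omega
  · have := unique (step (.inr (.inr (.inl ⟨hlt, rfl, rfl⟩))))
    omega

/-! ### Soundness of evaluation -/

/-- The numbers of `S` are `e 0, …, e (M - 1)`, in this order. -/
structure Enumerates {V : Type} (S : NumberStructure V) {M : ℕ} (e : Fin M → V) : Prop where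
  num_eq : S.num = Set.range e
  lt_iff {i j : Fin M} : S.lt (e i) (e j) ↔ i < j

namespace Enumerates

variable {V : Type} {S : NumberStructure V} {M : ℕ} {e : Fin M → V}

theorem injective (h : Enumerates S e) : Function.Injective e := fun i j hij => by
  refine le_antisymm ?_ ?_ <;> rw [← not_lt, ← h.lt_iff, hij, h.lt_iff] <;> exact lt_irrefl _

theorem forall_num (h : Enumerates S e) {P : V → Prop} : (∀ z ∈ S.num, P z) ↔ ∀ i, P (e i) := by
  rw [h.num_eq, Set.forall_mem_range]

theorem exists_num (h : Enumerates S e) {P : V → Prop} : (∃ z ∈ S.num, P z) ↔ ∃ i, P (e i) := by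
  rw [h.num_eq, Set.exists_range_iff]

theorem isZero_iff (h : Enumerates S e) {i : Fin M} : S.IsZero (e i) ↔ (i : ℕ) = 0 := by
  simp only [NumberStructure.IsZero, h.forall_num, h.lt_iff, Fin.lt_def]
  exact ⟨fun hi => Nat.eq_zero_of_not_pos (hi ⟨0, i.pos⟩), fun hi j => by omega⟩

theorem isSucc_iff (h : Enumerates S e) {i j : Fin M} :
    S.IsSucc (e i) (e j) ↔ (j : ℕ) = i + 1 := by
  simp only [NumberStructure.IsSucc, h.forall_num, h.lt_iff, Fin.lt_def]
  refine ⟨fun ⟨_, hbetween⟩ => ?_, fun hij => ⟨by omega, fun k => by omega⟩⟩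
  by_contra hne
  exact hbetween ⟨i + 1, by omega⟩ ⟨Nat.lt_succ_self i, by change (i : ℕ) + 1 < j; omega⟩

theorem pairStep_iff (h : Enumerates S e) {a' b' a b : Fin M} :
    S.PairStep (e a') (e b') (e a) (e b) ↔ Nat.pair a b = Nat.pair a' b' + 1 := by
  simp only [NumberStructure.PairStep, pair_eq_pair_add_one_iff, h.lt_iff, h.isSucc_iff,
    h.isZero_iff, h.injective.eq_iff, Fin.lt_def, Fin.ext_iff]

theorem pair_eq_of_isUnpairing (h : Enumerates S e) {P Q : V} (hPQ : S.IsUnpairing P Q)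
    {c a b : Fin M} (hP : S.rel P (e c) (e a)) (hQ : S.rel Q (e c) (e b)) :
    Nat.pair a b = c := by
  induction c using WellFoundedLT.induction generalizing a b with
  | ind c ih =>
    simp only [NumberStructure.IsUnpairing, h.forall_num, h.exists_num, h.isZero_iff,
      h.isSucc_iff, h.pairStep_iff] at hPQ
    rcases hPQ c a b hP hQ with ⟨hc, ha, hb⟩ | ⟨c', a', b', hc, hP', hQ', hstep⟩
    · rw [hc, ha, hb]
      rfl
    · rw [hstep, ih c' (Fin.lt_def.2 (by omega)) hP' hQ', hc]

theorem pair_eq_of_isPair (h : Enumerates S e) {c a b : Fin M}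
    (hc : S.IsPair (e c) (e a) (e b)) : Nat.pair a b = c :=
  let ⟨_, _, hPQ, hP, hQ⟩ := hc
  h.pair_eq_of_isUnpairing hPQ hP hQ

theorem mem_eval_prec_of_isPrecTable (h : Enumerates S e) {f g : Code}
    (hf : ∀ x y : Fin M, S.Eval f (e x) (e y) → (y : ℕ) ∈ f.eval x)
    (hg : ∀ x y : Fin M, S.Eval g (e x) (e y) → (y : ℕ) ∈ g.eval x) {R : V}
    (hR : S.IsPrecTable (S.Eval f) (S.Eval g) R) {x y : Fin M} (hxy : S.rel R (e x) (e y)) :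
    (y : ℕ) ∈ (Code.prec f g).eval x := by
  simp only [NumberStructure.IsPrecTable, NumberStructure.IsPrecStep, h.forall_num, h.exists_num,
    h.isZero_iff, h.isSucc_iff] at hR
  induction hn : (Nat.unpair x).2 using Nat.strong_induction_on generalizing x y with
  | _ k ih =>
    obtain ⟨a, n, hx, ⟨hn0, hy⟩ | ⟨m, hnm, x', hx', i, hi, q, hq, t, ht, hy⟩⟩ := hR x y hxy
    · rw [← h.pair_eq_of_isPair hx, hn0, Code.eval_prec_zero]
      exact hf a y hy
    · have hx'_eq := h.pair_eq_of_isPair hx'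
      have hm_lt : (m : ℕ) < k := by
        rw [← hn, ← h.pair_eq_of_isPair hx, Nat.unpair_pair, hnm]
        exact Nat.lt_succ_self m
      have hi_mem := ih m hm_lt hi (by rw [← hx'_eq, Nat.unpair_pair])
      rw [← h.pair_eq_of_isPair hx, hnm, mem_eval_prec_succ, hx'_eq]
      refine ⟨i, hi_mem, ?_⟩
      rw [h.pair_eq_of_isPair hq, h.pair_eq_of_isPair ht]
      exact hg t y hy

theorem exists_mem_eval_of_hasValue (h : Enumerates S e) {f : Code}
    (hf : ∀ x y : Fin M, S.Eval f (e x) (e y) → (y : ℕ) ∈ f.eval x) {P : V → Prop} {a t : Fin M}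
    (ht : S.HasValue (S.Eval f) P (e a) (e t)) :
    ∃ z : Fin M, P (e z) ∧ (z : ℕ) ∈ f.eval (Nat.pair a t) := by
  simp only [NumberStructure.HasValue, h.exists_num] at ht
  obtain ⟨q, hq, z, hz, hqz⟩ := ht
  exact ⟨z, hz, h.pair_eq_of_isPair hq ▸ hf q z hqz⟩

theorem mem_eval_rfind_of_eval (h : Enumerates S e) {f : Code}
    (hf : ∀ x y : Fin M, S.Eval f (e x) (e y) → (y : ℕ) ∈ f.eval x) {x y : Fin M}
    (hxy : S.Eval (.rfind' f) (e x) (e y)) : (y : ℕ) ∈ (Code.rfind' f).eval x := by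
  simp only [NumberStructure.Eval, h.exists_num, h.forall_num, h.lt_iff, not_lt] at hxy
  obtain ⟨a, m, hx, hmy, hy, hlt⟩ := hxy
  rw [← h.pair_eq_of_isPair hx, mem_eval_rfind]
  refine ⟨hmy, ?_, fun t hmt hty => ?_⟩
  · obtain ⟨z, hz, hmem⟩ := h.exists_mem_eval_of_hasValue hf hy
    rwa [h.isZero_iff.1 hz] at hmem
  · obtain ⟨z, hz, hmem⟩ := h.exists_mem_eval_of_hasValue hf (hlt ⟨t, hty.trans y.2⟩ hmt hty)
    exact ⟨z, hmem, fun hz0 => hz (h.isZero_iff.2 hz0)⟩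

theorem mem_eval_of_eval (h : Enumerates S e) (c : Code) (x y : Fin M)
    (hxy : S.Eval c (e x) (e y)) : (y : ℕ) ∈ c.eval x := by
  induction c generalizing x y with
  | zero => exact Part.mem_some_iff.2 (h.isZero_iff.1 hxy)
  | succ => exact Part.mem_some_iff.2 (h.isSucc_iff.1 hxy)
  | left =>
    obtain ⟨b, hb⟩ := h.exists_num.1 hxy
    simp [Code.eval, ← h.pair_eq_of_isPair hb]
  | right =>
    obtain ⟨a, ha⟩ := h.exists_num.1 hxy
    simp [Code.eval, ← h.pair_eq_of_isPair ha]
  | pair f g hf hg =>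
    simp only [NumberStructure.Eval, h.exists_num] at hxy
    obtain ⟨a, b, ha, hb, hy⟩ := hxy
    exact mem_eval_pair.2 ⟨a, hf _ _ ha, b, hg _ _ hb, h.pair_eq_of_isPair hy⟩
  | comp f g hf hg =>
    obtain ⟨z, hz, hy⟩ := h.exists_num.1 hxy
    exact mem_eval_comp.2 ⟨z, hg _ _ hz, hf _ _ hy⟩
  | prec f g hf hg =>
    obtain ⟨R, hR, hRxy⟩ := hxy
    exact h.mem_eval_prec_of_isPrecTable hf hg hR hRxy
  | rfind' f hf => exact h.mem_eval_rfind_of_eval hf hxy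

end Enumerates

/-! ### Completeness of evaluation -/

/-- `S` is enumerated by `e` and names every binary relation between its numbers. -/
structure FullyEnumerates {V : Type} (S : NumberStructure V) {M : ℕ} (e : Fin M → V) : Prop
    extends Enumerates S e where
  exists_rel (R : ℕ → ℕ → Prop) : ∃ A, ∀ {i j : Fin M}, S.rel A (e i) (e j) ↔ R i j

theorem FullyEnumerates.isPair {V : Type} {S : NumberStructure V} {M : ℕ} {e : Fin M → V}
    (h : FullyEnumerates S e) {c a b : Fin M} (hc : Nat.pair a b = c) :
    S.IsPair (e c) (e a) (e b) := by
  obtain ⟨P, hP⟩ := h.exists_rel fun x y => (Nat.unpair x).1 = y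
  obtain ⟨Q, hQ⟩ := h.exists_rel fun x y => (Nat.unpair x).2 = y
  refine ⟨P, Q, ?_, hP.2 (by rw [← hc, Nat.unpair_pair]), hQ.2 (by rw [← hc, Nat.unpair_pair])⟩
  simp only [NumberStructure.IsUnpairing, h.forall_num, h.exists_num, hP, hQ, h.isZero_iff,
    h.isSucc_iff, h.pairStep_iff]
  intro c a b ha hb
  rcases hc : (c : ℕ) with _ | c'
  · rw [hc] at ha hb
    exact .inl ⟨rfl, ha.symm, hb.symm⟩
  · have hlt : c' < M := by omega
    refine .inr ⟨⟨c', hlt⟩, ⟨_, (Nat.unpair_left_le c').trans_lt hlt⟩,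
      ⟨_, (Nat.unpair_right_le c').trans_lt hlt⟩, rfl, rfl, rfl, ?_⟩
    rw [← ha, ← hb, Nat.pair_unpair, Nat.pair_unpair, hc]

/-- Every sufficiently large full number structure witnesses that `c` maps `x` to `y`. -/
def EventuallyEvaluates (c : Code) (x y : ℕ) : Prop :=
  ∀ᶠ M in atTop, ∀ (V : Type) (S : NumberStructure V) (e : Fin M → V), FullyEnumerates S e →
    ∀ u w : Fin M, (u : ℕ) = x → (w : ℕ) = y → S.Eval c (e u) (e w)

namespace EventuallyEvaluates

variable {f g : Code} {x y z a b m n : ℕ}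

theorem left : EventuallyEvaluates .left x (Nat.unpair x).1 := by
  refine .of_forall fun M V S e h u w hu hw => h.exists_num.2 ?_
  have hlt := (Nat.unpair_right_le x).trans_lt (hu ▸ u.2)
  exact ⟨⟨(Nat.unpair x).2, hlt⟩, h.isPair (by rw [hw, Nat.pair_unpair, hu])⟩

theorem right : EventuallyEvaluates .right x (Nat.unpair x).2 := by
  refine .of_forall fun M V S e h u w hu hw => h.exists_num.2 ?_
  have hlt := (Nat.unpair_left_le x).trans_lt (hu ▸ u.2)
  exact ⟨⟨(Nat.unpair x).1, hlt⟩, h.isPair (by rw [hw, Nat.pair_unpair, hu])⟩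

theorem pair (hf : EventuallyEvaluates f x a) (hg : EventuallyEvaluates g x b) :
    EventuallyEvaluates (.pair f g) x (Nat.pair a b) := by
  filter_upwards [hf, hg] with M hf hg V S e h u w hu hw
  have ha := (Nat.left_le_pair a b).trans_lt (hw ▸ w.2)
  have hb := (Nat.right_le_pair a b).trans_lt (hw ▸ w.2)
  simp only [NumberStructure.Eval, h.exists_num]
  exact ⟨⟨a, ha⟩, ⟨b, hb⟩, hf V S e h _ _ hu rfl, hg V S e h _ _ hu rfl, h.isPair hw.symm⟩

theorem comp (hf : EventuallyEvaluates f z y) (hg : EventuallyEvaluates g x z) :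
    EventuallyEvaluates (.comp f g) x y := by
  filter_upwards [hf, hg, eventually_gt_atTop z] with M hf hg hz V S e h u w hu hw
  exact h.exists_num.2 ⟨⟨z, hz⟩, hg V S e h _ _ hu rfl, hf V S e h _ _ rfl hw⟩

theorem prec {s : ℕ → ℕ} (hf : EventuallyEvaluates f a (s 0))
    (hg : ∀ m < n, EventuallyEvaluates g (Nat.pair a (Nat.pair m (s m))) (s (m + 1))) :
    EventuallyEvaluates (.prec f g) (Nat.pair a n) (s n) := by
  have hg := (eventually_all_finite (Set.finite_Iio n)).2 hg
  have hbound := (eventually_all_finite (Set.finite_Iio n)).2 fun m _ =>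
    eventually_gt_atTop (Nat.pair a (Nat.pair m (s m)))
  filter_upwards [hf, hg, hbound] with M hf hg hbound V S e h u w hu hw
  obtain ⟨R, hR⟩ := h.exists_rel fun x y => ∃ m ≤ n, x = Nat.pair a m ∧ y = s m
  refine ⟨R, ?_, hR.2 ⟨n, le_rfl, hu, hw⟩⟩
  simp only [NumberStructure.IsPrecTable, NumberStructure.IsPrecStep, h.forall_num, h.exists_num,
    hR, h.isZero_iff, h.isSucc_iff]
  rintro x y ⟨m, hmn, hx, hy⟩
  have ha := (Nat.left_le_pair a m).trans_lt (hx ▸ x.2)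
  have hm := (Nat.right_le_pair a m).trans_lt (hx ▸ x.2)
  refine ⟨⟨a, ha⟩, ⟨m, hm⟩, h.isPair hx.symm, ?_⟩
  rcases m with _ | m
  · exact .inl ⟨rfl, hf V S e h _ _ rfl hy⟩
  · have ht := hbound m hmn
    have hq := (Nat.right_le_pair _ _).trans_lt ht
    have hi := (Nat.right_le_pair _ _).trans_lt hq
    have hx' := (Nat.pair_lt_pair_right a m.lt_succ_self).trans (hx ▸ x.2)
    exact .inr ⟨⟨m, m.lt_succ_self.trans hm⟩, rfl, ⟨_, hx'⟩, h.isPair rfl, ⟨_, hi⟩,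
      ⟨m, by omega, rfl, rfl⟩, ⟨_, hq⟩, h.isPair rfl, ⟨_, ht⟩, h.isPair rfl,
      hg m hmn V S e h _ _ rfl hy⟩

theorem rfind (hmy : m ≤ y) (hzero : EventuallyEvaluates f (Nat.pair a y) 0)
    (hlt : ∀ t, m ≤ t → t < y → ∃ z ≠ 0, EventuallyEvaluates f (Nat.pair a t) z) :
    EventuallyEvaluates (.rfind' f) (Nat.pair a m) y := by
  choose! z hz0 hz using hlt
  have hz := (eventually_all_finite (Set.finite_Ico m y)).2 fun t ht => hz t ht.1 ht.2
  have hbound := (eventually_all_finite (Set.finite_Ico m y)).2 fun t _ =>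
    (eventually_gt_atTop (z t)).and (eventually_gt_atTop (Nat.pair a t))
  filter_upwards [hzero, hz, hbound, eventually_gt_atTop (Nat.pair a y)]
    with M hzero hz hbound hay V S e h u w hu hw
  have ha := (Nat.left_le_pair a m).trans_lt (hu ▸ u.2)
  have hm := (Nat.right_le_pair a m).trans_lt (hu ▸ u.2)
  simp only [NumberStructure.Eval, NumberStructure.HasValue, h.exists_num, h.forall_num, h.lt_iff,
    not_lt, h.isZero_iff, Fin.lt_def]
  refine ⟨⟨a, ha⟩, ⟨m, hm⟩, h.isPair hu.symm, hw ▸ hmy, ?_, fun t hmt hty => ?_⟩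
  · exact ⟨⟨_, hay⟩, h.isPair (by rw [hw]), ⟨0, u.pos⟩, rfl, hzero V S e h _ _ rfl rfl⟩
  · obtain ⟨hzt, hat⟩ := hbound t ⟨hmt, hw ▸ hty⟩
    exact ⟨⟨_, hat⟩, h.isPair rfl, ⟨_, hzt⟩, hz0 t hmt (hw ▸ hty),
      hz t ⟨hmt, hw ▸ hty⟩ V S e h _ _ rfl rfl⟩

end EventuallyEvaluates

theorem eventuallyEvaluates_of_mem_eval {c : Code} {x y : ℕ} (hy : y ∈ c.eval x) :
    EventuallyEvaluates c x y := by
  induction c generalizing x y with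
  | zero =>
    exact .of_forall fun M V S e h u w _ hw =>
      h.isZero_iff.2 (hw.trans (Part.mem_some_iff.1 hy))
  | succ =>
    exact .of_forall fun M V S e h u w hu hw =>
      h.isSucc_iff.2 (hu ▸ hw.trans (Part.mem_some_iff.1 hy))
  | left => exact Part.mem_some_iff.1 hy ▸ .left
  | right => exact Part.mem_some_iff.1 hy ▸ .right
  | pair f g hf hg =>
    obtain ⟨a, ha, b, hb, rfl⟩ := mem_eval_pair.1 hy
    exact (hf ha).pair (hg hb)
  | comp f g hf hg =>
    obtain ⟨z, hz, hy⟩ := mem_eval_comp.1 hy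
    exact (hf hy).comp (hg hz)
  | prec f g hf hg =>
    rw [← Nat.pair_unpair x] at hy ⊢
    obtain ⟨s, rfl, hs0, hs⟩ := exists_trace_of_mem_eval_prec hy
    exact .prec (hf hs0) fun m hm => hg (hs m hm)
  | rfind' f hf =>
    rw [← Nat.pair_unpair x] at hy ⊢
    obtain ⟨hmy, hzero, hlt⟩ := mem_eval_rfind.1 hy
    refine .rfind hmy (hf hzero) fun t hmt hty => ?_
    obtain ⟨z, hz, hz0⟩ := hlt t hmt hty
    exact ⟨z, hz0, hf hz⟩

/-! ### The coding graph -/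

/-- `G` contains an induced copy of `H` outside which the image of `w` has no neighbours. -/
def HasClosedCopy {V W : Type*} (G : SimpleGraph V) (H : SimpleGraph W) (w : W) : Prop :=
  ∃ f : H ↪g G, G.neighborSet (f w) ⊆ Set.range f

theorem HasClosedCopy.of_iso {V W W' : Type*} {G : SimpleGraph V} {H : SimpleGraph W}
    {H' : SimpleGraph W'} {w : W} (e : H ≃g H') (hG : HasClosedCopy G H' (e w)) :
    HasClosedCopy G H w := by
  obtain ⟨f, hf⟩ := hG
  refine ⟨f.comp e.toEmbedding, fun z hz => ?_⟩
  obtain ⟨x, rfl⟩ := hf hz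
  exact ⟨e.symm x, congrArg f (e.apply_symm_apply x)⟩

/-- The vertices of the coding graph for the numbers below `M`: the hub, the two markers, a colour
for every binary relation, the numbers, and two inner vertices of a path from `x` to `y` for all
numbers `x`, `y` and every relation. -/
inductive CodingVertex (M : ℕ) : Type
  | hub
  | numMark
  | headMark
  | colour (R : Fin M → Fin M → Prop)
  | num (x : Fin M)
  | tail (R : Fin M → Fin M → Prop) (x y : Fin M)
  | head (R : Fin M → Fin M → Prop) (x y : Fin M)

namespace CodingVertex

variable {M : ℕ}

instance : Finite (CodingVertex M) := by
  let toSum : CodingVertex M → Fin 3 ⊕ (Fin M → Fin M → Prop) ⊕ Fin M ⊕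
      Bool × (Fin M → Fin M → Prop) × Fin M × Fin M
    | hub => .inl 0
    | numMark => .inl 1
    | headMark => .inl 2
    | colour R => .inr (.inl R)
    | num x => .inr (.inr (.inl x))
    | tail R x y => .inr (.inr (.inr (false, R, x, y)))
    | head R x y => .inr (.inr (.inr (true, R, x, y)))
  refine Finite.of_injective toSum fun u w h => ?_
  cases u <;> cases w <;> simp_all [toSum]

/-- The edges of the coding graph, each in one orientation. The path from `x` to `y` for `R` is
attached to `x` only if `R x y`. -/
inductive Arc : CodingVertex M → CodingVertex M → Prop
  | hub {w} (hw : w ≠ hub) : Arc hub w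
  | numMark x : Arc numMark (num x)
  | headMark R x y : Arc headMark (head R x y)
  | colour R x y : Arc (colour R) (tail R x y)
  | num_tail {R x y} (hxy : R x y) : Arc (num x) (tail R x y)
  | tail_head R x y : Arc (tail R x y) (head R x y)
  | head_num R x y : Arc (head R x y) (num y)

theorem Arc.ne {u w : CodingVertex M} (h : Arc u w) : u ≠ w := by
  cases h <;> simp_all [eq_comm]

end CodingVertex

/-- The graph coding the numbers below `M`, their order, and all binary relations between them. -/
def codingGraph (M : ℕ) : SimpleGraph (CodingVertex M) where
  Adj u w := u.Arc w ∨ w.Arc u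
  symm := ⟨fun _ _ h => h.symm⟩
  loopless := ⟨fun _ h => h.elim (fun h => h.ne rfl) fun h => h.ne rfl⟩

namespace codingGraph

open CodingVertex

variable {M : ℕ} {u w : CodingVertex M} {R : Fin M → Fin M → Prop} {x y : Fin M}

theorem adj_hub_iff : (codingGraph M).Adj hub w ↔ w ≠ hub :=
  ⟨fun h => h.ne', fun h => .inl (.hub h)⟩

theorem adj_numMark_iff (hw : w ≠ hub) : (codingGraph M).Adj numMark w ↔ ∃ x, w = num x := by
  refine ⟨?_, fun ⟨x, hx⟩ => hx ▸ .inl (.numMark x)⟩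
  rintro (h | h) <;> cases h
  · exact ⟨_, rfl⟩
  · exact absurd rfl hw

theorem adj_headMark_iff (hw : w ≠ hub) :
    (codingGraph M).Adj headMark w ↔ ∃ R x y, w = head R x y := by
  refine ⟨?_, fun ⟨R, x, y, h⟩ => h ▸ .inl (.headMark R x y)⟩
  rintro (h | h) <;> cases h
  · exact ⟨_, _, _, rfl⟩
  · exact absurd rfl hw

theorem adj_colour_iff (hw : w ≠ hub) :
    (codingGraph M).Adj (colour R) w ↔ ∃ x y, w = tail R x y := by
  refine ⟨?_, fun ⟨x, y, h⟩ => h ▸ .inl (.colour R x y)⟩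
  rintro (h | h) <;> cases h
  · exact ⟨_, _, rfl⟩
  · exact absurd rfl hw

theorem rel_of_path (hu : u ≠ hub) (hw : w ≠ hub) (hcolour : (codingGraph M).Adj (colour R) u)
    (hhead : (codingGraph M).Adj headMark w) (hxu : (codingGraph M).Adj (num x) u)
    (huw : (codingGraph M).Adj u w) (hwy : (codingGraph M).Adj w (num y)) : R x y := by
  obtain ⟨x', y', rfl⟩ := (adj_colour_iff hu).1 hcolour
  obtain ⟨R', x'', y'', rfl⟩ := (adj_headMark_iff hw).1 hhead
  have hx' : x = x' ∧ R x' y' := by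
    rcases hxu with h | h <;> cases h
    exact ⟨rfl, ‹_›⟩
  have hend : x' = x'' ∧ y' = y'' := by
    rcases huw with h | h <;> cases h
    exact ⟨rfl, rfl⟩
  have hy'' : y'' = y := by
    rcases hwy with h | h <;> cases h
    rfl
  rw [hx'.1, ← hy'', ← hend.2]
  exact hx'.2

/-- The four vertices of the coding graph that serve as parameters of `codedNumbers`. -/
def parameters (M : ℕ) : Fin 4 → CodingVertex M :=
  ![hub, numMark, headMark, colour (· < ·)]

section Embedding

variable {V : Type} {G : SimpleGraph V} {f : codingGraph M ↪g G}

theorem rel_coded_iff (hf : G.neighborSet (f hub) ⊆ Set.range f) :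
    (codedNumbers G (f ∘ parameters M)).rel (f (colour R)) (f (num x)) (f (num y)) ↔ R x y := by
  constructor
  · rintro ⟨a, b, ha, hb, hpath⟩
    obtain ⟨u, rfl⟩ := hf ha
    obtain ⟨w, rfl⟩ := hf hb
    obtain ⟨hcolour, hhead, hxu, huw, hwy⟩ := hpath
    exact rel_of_path (adj_hub_iff.1 (f.map_adj_iff.1 ha)) (adj_hub_iff.1 (f.map_adj_iff.1 hb))
      (f.map_adj_iff.1 hcolour) (f.map_adj_iff.1 hhead) (f.map_adj_iff.1 hxu)
      (f.map_adj_iff.1 huw) (f.map_adj_iff.1 hwy)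
  · exact fun hxy => ⟨f (tail R x y), f (head R x y),
      f.map_adj_iff.2 (adj_hub_iff.2 nofun), f.map_adj_iff.2 (adj_hub_iff.2 nofun),
      f.map_adj_iff.2 (.inl (.colour R x y)), f.map_adj_iff.2 (.inl (.headMark R x y)),
      f.map_adj_iff.2 (.inl (.num_tail hxy)), f.map_adj_iff.2 (.inl (.tail_head R x y)),
      f.map_adj_iff.2 (.inl (.head_num R x y))⟩

theorem num_coded_eq (hf : G.neighborSet (f hub) ⊆ Set.range f) :
    (codedNumbers G (f ∘ parameters M)).num = Set.range (f ∘ num) := by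
  ext z
  constructor
  · rintro ⟨hhub, hmark⟩
    obtain ⟨w, rfl⟩ := hf hhub
    obtain ⟨x, rfl⟩ :=
      (adj_numMark_iff (adj_hub_iff.1 (f.map_adj_iff.1 hhub))).1 (f.map_adj_iff.1 hmark)
    exact ⟨x, rfl⟩
  · rintro ⟨x, rfl⟩
    exact ⟨f.map_adj_iff.2 (adj_hub_iff.2 nofun), f.map_adj_iff.2 (.inl (.numMark x))⟩

theorem fullyEnumerates (hf : G.neighborSet (f hub) ⊆ Set.range f) :
    FullyEnumerates (codedNumbers G (f ∘ parameters M)) (f ∘ num) where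
  num_eq := num_coded_eq hf
  lt_iff := rel_coded_iff hf
  exists_rel R := ⟨f (colour fun i j => R i j), rel_coded_iff hf⟩

end Embedding

end codingGraph

/-! ### The halting sentence -/

theorem Enumerates.isLinear {V : Type} {S : NumberStructure V} {M : ℕ} {e : Fin M → V}
    (h : Enumerates S e) : S.IsLinear := by
  simp only [NumberStructure.IsLinear, h.forall_num, h.lt_iff, h.injective.eq_iff]
  exact ⟨lt_irrefl, fun _ _ _ => lt_trans, lt_trichotomy⟩

theorem NumberStructure.IsLinear.exists_enumerates {V : Type} [Finite V] {S : NumberStructure V}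
    (h : S.IsLinear) : ∃ (M : ℕ) (e : Fin M → V), Enumerates S e := by
  classical
  obtain ⟨hirrefl, htrans, htri⟩ := h
  let r (x y : S.num) : Prop := S.lt x y
  have : IsStrictTotalOrder S.num r :=
    { trichotomous x y hxy hyx := Subtype.ext
        (((htri x x.2 y y.2).resolve_left hxy).resolve_right hyx)
      irrefl x := hirrefl x x.2
      trans x y z := htrans x x.2 y y.2 z z.2 }
  let _ : LinearOrder S.num := linearOrderOfSTO r
  have : Fintype S.num := Fintype.ofFinite S.num
  let e := monoEquivOfFin S.num rfl
  exact ⟨_, fun i => e i, (by rw [← Function.comp_def, e.surjective.range_comp, Subtype.range_coe]),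
    e.lt_iff_lt⟩

/-- The four parameters code a linearly ordered number structure in which `c` has a value. -/
def Halts (c : Code) : GraphProperty 4 0 := fun _ G π _ =>
  (codedNumbers G π).IsLinear ∧ ∃ x ∈ (codedNumbers G π).num, ∃ y ∈ (codedNumbers G π).num,
    (codedNumbers G π).Eval c x y

theorem EvalDefinable.halts {c : Code} {d : ℕ} (h : EvalDefinable c d) :
    DefinableAtDepth (d + 5) (Halts c) :=
  (definable_isLinear (d := d).mono (by omega)).and
    ((definable_exists_mem_num (definable_exists_mem_num (h _ _ _))).mono (by omega))

theorem mem_eval_comp_const {c : Code} {j x y : ℕ} :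
    y ∈ (c.comp (Code.const j)).eval x ↔ y ∈ c.eval j := by
  simp [mem_eval_comp, Code.eval_const]

theorem lt_card_of_halts {c : Code} {j y : ℕ} (hy : y ∈ c.eval j) {V : Type} [Finite V]
    {G : SimpleGraph V} {π : Fin 4 → V} (h : Halts (c.comp (Code.const j)) V G π default) :
    y < Nat.card V := by
  obtain ⟨hlinear, hvalue⟩ := h
  obtain ⟨M, e, he⟩ := hlinear.exists_enumerates
  simp only [he.exists_num] at hvalue
  obtain ⟨x, z, hxz⟩ := hvalue
  have hyz : y = z := Part.mem_unique hy (mem_eval_comp_const.1 (he.mem_eval_of_eval _ _ _ hxz))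
  calc y < M := hyz ▸ z.2
    _ = Nat.card (Fin M) := (Nat.card_fin M).symm
    _ ≤ Nat.card V := Nat.card_le_card_of_injective e he.injective

theorem exists_halts_of_hasClosedCopy {c : Code} {j y : ℕ} (hy : y ∈ c.eval j) :
    ∃ M, ∀ (V : Type) (G : SimpleGraph V), HasClosedCopy G (codingGraph M) .hub →
      ∃ π, Halts (c.comp (Code.const j)) V G π default := by
  have hconst := eventuallyEvaluates_of_mem_eval (mem_eval_comp_const (x := 0).2 hy)
  obtain ⟨M, hM, hyM⟩ := (hconst.and (eventually_gt_atTop y)).exists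
  refine ⟨M, fun V G ⟨f, hf⟩ => ⟨f ∘ codingGraph.parameters M, ?_⟩⟩
  have h := codingGraph.fullyEnumerates hf
  refine ⟨h.isLinear, h.exists_num.2 ⟨⟨0, y.zero_le.trans_lt hyM⟩, h.exists_num.2 ⟨⟨y, hyM⟩, ?_⟩⟩⟩
  exact hM V _ _ h _ _ rfl rfl

theorem exists_halting_sentence (c : Code) :
    ∃ D, ∀ j, ∃ φ : Language.graph.Sentence, qDepth φ ≤ D + j ∧ ∀ y ∈ c.eval j,
      (∀ (V : Type) [Finite V] (G : SimpleGraph V),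
        @Language.Sentence.Realize _ V G.structure φ → y < Nat.card V) ∧
      ∃ M, ∀ (V : Type) (G : SimpleGraph V), HasClosedCopy G (codingGraph M) .hub →
        @Language.Sentence.Realize _ V G.structure φ := by
  obtain ⟨d, hd⟩ := exists_evalDefinable c
  refine ⟨d + 13, fun j => ?_⟩
  obtain ⟨φ, hdepth, hφ⟩ := (hd.comp_const j).halts.exists_sentence
  refine ⟨φ, by omega, fun y hy => ⟨fun V _ G h => ?_, ?_⟩⟩
  · obtain ⟨π, hπ⟩ := (hφ V G).1 h
    exact lt_card_of_halts hy hπ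
  · obtain ⟨M, hM⟩ := exists_halts_of_hasClosedCopy hy
    exact ⟨M, fun V G h => (hφ V G).2 (hM V G h)⟩

/-! ### Probabilities in the random graph -/

section Probability

variable {p : ℕ → ℝ} {n : ℕ}

open scoped Classical in
/-- The probability that the potential edge `e` is decided as in the target graph `B`. -/
noncomputable def edgeWeight (p : ℕ → ℝ) (B : SimpleGraph ℕ) (e : EdgeIdx n) : ℝ :=
  if B.Adj e.1.1 e.1.2 then p (e.1.2 - e.1.1) else 1 - p (e.1.2 - e.1.1)

open scoped Classical in
/-- The outcome `ω` coincides with the target graph `B` on the potential edges in `T`. -/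
def AgreesOn (B : SimpleGraph ℕ) (T : Finset (EdgeIdx n)) (ω : Sample n) : Prop :=
  ∀ e ∈ T, ω e = decide (B.Adj e.1.1 e.1.2)

theorem pr_eq_sum_filter (p : ℕ → ℝ) (P : Sample n → Prop) [DecidablePred P] :
    Pr p n P = ∑ ω with P ω, sampleWeight p ω := by
  rw [Finset.sum_filter, Pr]
  congr!

theorem edgeWeight_mem_Icc (hp : ∀ i, p i ∈ Set.Icc 0 1) (B : SimpleGraph ℕ) (e : EdgeIdx n) :
    edgeWeight p B e ∈ Set.Icc 0 1 := by
  unfold edgeWeight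
  split_ifs
  · exact hp _
  · exact Set.Icc.one_sub_mem (hp _)

theorem pr_agreesOn (p : ℕ → ℝ) (B : SimpleGraph ℕ) (T : Finset (EdgeIdx n)) :
    Pr p n (AgreesOn B T) = ∏ e ∈ T, edgeWeight p B e := by
  classical
  let allowed (e : EdgeIdx n) : Finset Bool := if e ∈ T then {decide (B.Adj e.1.1 e.1.2)} else .univ
  have hallowed : Finset.univ.filter (AgreesOn B T) = Fintype.piFinset allowed := by
    ext ω
    rw [Finset.mem_filter_univ, Fintype.mem_piFinset]
    refine forall_congr' fun e => ?_
    by_cases he : e ∈ T <;> simp [allowed, he]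
  have hprod := Finset.prod_univ_sum allowed fun e b =>
    if b then p (e.1.2 - e.1.1) else 1 - p (e.1.2 - e.1.1)
  rw [pr_eq_sum_filter, hallowed]
  refine hprod.symm.trans ?_
  rw [← Finset.prod_subset T.subset_univ]
  · refine Finset.prod_congr rfl fun e he => ?_
    simp [allowed, he, edgeWeight]
  · intro e _ he
    simp [allowed, he]

theorem sum_sampleWeight (p : ℕ → ℝ) (n : ℕ) : ∑ ω : Sample n, sampleWeight p ω = 1 := by
  simpa [Pr, AgreesOn] using pr_agreesOn p ⊥ (∅ : Finset (EdgeIdx n))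

theorem sampleWeight_nonneg (hp : ∀ i, p i ∈ Set.Icc 0 1) (ω : Sample n) :
    0 ≤ sampleWeight p ω := by
  refine Finset.prod_nonneg fun e _ => ?_
  split_ifs
  · exact (hp _).1
  · exact sub_nonneg.2 (hp _).2

theorem pr_mono (hp : ∀ i, p i ∈ Set.Icc 0 1) {P Q : Sample n → Prop} (h : ∀ ω, P ω → Q ω) :
    Pr p n P ≤ Pr p n Q := by
  classical
  rw [pr_eq_sum_filter, pr_eq_sum_filter]
  exact Finset.sum_le_sum_of_subset_of_nonneg (Finset.monotone_filter_right _ fun ω _ => h ω)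
    fun ω _ _ => sampleWeight_nonneg hp ω

theorem pr_nonneg (hp : ∀ i, p i ∈ Set.Icc 0 1) (P : Sample n → Prop) : 0 ≤ Pr p n P :=
  Finset.sum_nonneg fun ω _ => by
    split_ifs
    exacts [sampleWeight_nonneg hp ω, le_rfl]

theorem pr_add_pr_not (p : ℕ → ℝ) (P : Sample n → Prop) :
    Pr p n P + Pr p n (fun ω => ¬ P ω) = 1 := by
  classical
  rw [pr_eq_sum_filter, pr_eq_sum_filter, Finset.sum_filter_add_sum_filter_not, sum_sampleWeight]

theorem pr_le_one (hp : ∀ i, p i ∈ Set.Icc 0 1) (P : Sample n → Prop) : Pr p n P ≤ 1 := by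
  rw [← pr_add_pr_not p P]
  exact le_add_of_nonneg_right (pr_nonneg hp _)

theorem pr_eq_zero {P : Sample n → Prop} (h : ∀ ω, ¬ P ω) : Pr p n P = 0 :=
  Finset.sum_eq_zero fun ω _ => if_neg (h ω)

/-! ### The second moment method -/

/-- The expectation of a random variable on the outcomes of `G(n, p̄)`. -/
noncomputable def expectation (p : ℕ → ℝ) (X : Sample n → ℝ) : ℝ :=
  ∑ ω, X ω * sampleWeight p ω

theorem expectation_ite (p : ℕ → ℝ) (P : Sample n → Prop) [DecidablePred P] :
    expectation p (fun ω => if P ω then 1 else 0) = Pr p n P := by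
  simp only [expectation, pr_eq_sum_filter, Finset.sum_filter, ite_mul, one_mul, zero_mul]

theorem expectation_sum {ι : Type*} (s : Finset ι) (X : ι → Sample n → ℝ) :
    expectation p (fun ω => ∑ j ∈ s, X j ω) = ∑ j ∈ s, expectation p (X j) := by
  simp only [expectation, Finset.sum_mul]
  exact Finset.sum_comm

theorem expectation_sub_sq (X : Sample n → ℝ) :
    expectation p (fun ω => (X ω - expectation p X) ^ 2) =
      expectation p (fun ω => X ω ^ 2) - expectation p X ^ 2 := by
  have expand (μ : ℝ) : expectation p (fun ω => (X ω - μ) ^ 2) =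
      expectation p (fun ω => X ω ^ 2) - 2 * μ * expectation p X + μ ^ 2 := by
    calc expectation p (fun ω => (X ω - μ) ^ 2)
        = ∑ ω : Sample n, (X ω ^ 2 * sampleWeight p ω - 2 * μ * (X ω * sampleWeight p ω)
            + μ ^ 2 * sampleWeight p ω) := Finset.sum_congr rfl fun ω _ => by ring
      _ = _ := by
        rw [Finset.sum_add_distrib, Finset.sum_sub_distrib, ← Finset.mul_sum, ← Finset.mul_sum,
          sum_sampleWeight, mul_one]
        rfl
  rw [expand]
  ring

theorem pr_eq_zero_mul_sq_le (hp : ∀ i, p i ∈ Set.Icc 0 1) (X : Sample n → ℝ) :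
    Pr p n (fun ω => X ω = 0) * expectation p X ^ 2 ≤
      expectation p (fun ω => X ω ^ 2) - expectation p X ^ 2 := by
  rw [← expectation_sub_sq, Pr, Finset.sum_mul]
  refine Finset.sum_le_sum fun ω _ => ?_
  have hω := sampleWeight_nonneg hp ω
  split_ifs with hX
  · simp only [hX]
    rw [zero_sub, neg_sq, mul_comm]
  · rw [zero_mul]
    positivity

theorem pr_forall_not_mul_sq_le (hp : ∀ i, p i ∈ Set.Icc 0 1) {ι : Type*} (s : Finset ι)
    (E : ι → Sample n → Prop) :
    Pr p n (fun ω => ∀ j ∈ s, ¬ E j ω) * (∑ j ∈ s, Pr p n (E j)) ^ 2 ≤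
      ∑ j ∈ s, ∑ l ∈ s, (Pr p n (fun ω => E j ω ∧ E l ω) - Pr p n (E j) * Pr p n (E l)) := by
  classical
  let X (ω : Sample n) : ℝ := ∑ j ∈ s, if E j ω then 1 else 0
  have hX : expectation p X = ∑ j ∈ s, Pr p n (E j) := by
    simp only [X, expectation_sum, expectation_ite]
  have hXX : expectation p (fun ω => X ω ^ 2) =
      ∑ j ∈ s, ∑ l ∈ s, Pr p n (fun ω => E j ω ∧ E l ω) := by
    simp only [X, sq, Finset.sum_mul_sum, expectation_sum, mul_ite, mul_one, mul_zero, ← ite_and,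
      expectation_ite]
    exact Finset.sum_comm
  have hX0 (ω : Sample n) (hω : ∀ j ∈ s, ¬ E j ω) : X ω = 0 :=
    Finset.sum_eq_zero fun j hj => if_neg (hω j hj)
  simp only [Finset.sum_sub_distrib, ← Finset.sum_mul_sum, ← sq, ← hX, ← hXX]
  exact (mul_le_mul_of_nonneg_right (pr_mono hp hX0) (sq_nonneg _)).trans
    (pr_eq_zero_mul_sq_le hp X)

end Probability

/-! ### Products of edge weights -/

theorem prod_le_prod_of_injOn {ι κ : Type*} {T : Finset ι} {U : Finset κ} {f : κ → ℝ}
    {w : ι → ℝ} (g : ι → κ) (hf : ∀ k, f k ∈ Set.Icc 0 1) (hg : Set.InjOn g T)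
    (hmaps : ∀ i ∈ T, g i ∈ U) (hle : ∀ i ∈ T, f (g i) ≤ w i) :
    ∏ k ∈ U, f k ≤ ∏ i ∈ T, w i := by
  classical
  calc ∏ k ∈ U, f k ≤ ∏ k ∈ T.image g, f k :=
        Finset.prod_le_prod_of_subset_of_le_one (Finset.image_subset_iff.2 hmaps)
          (fun k _ => (hf k).1) fun k _ _ => (hf k).2
    _ = ∏ i ∈ T, f (g i) := Finset.prod_image hg
    _ ≤ ∏ i ∈ T, w i := Finset.prod_le_prod (fun i _ => (hf _).1) hle

theorem prod_mul_prod_le_prod_union {ι : Type*} [DecidableEq ι] {f : ι → ℝ}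
    (hf : ∀ i, f i ∈ Set.Icc 0 1) (s t : Finset ι) :
    (∏ i ∈ s, f i) * ∏ i ∈ t, f i ≤ ∏ i ∈ s ∪ t, f i := by
  rw [← Finset.prod_union_inter]
  exact mul_le_of_le_one_right (Finset.prod_nonneg fun i _ => (hf i).1)
    (Finset.prod_le_one (fun i _ => (hf i).1) fun i _ => (hf i).2)

theorem EdgeIdx.ext_val {n : ℕ} {e e' : EdgeIdx n} (h₁ : (e.1.1 : ℕ) = e'.1.1)
    (h₂ : (e.1.2 : ℕ) = e'.1.2) : e = e' :=
  Subtype.ext (Prod.ext (Fin.ext h₁) (Fin.ext h₂))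

section EdgeWeights

variable {p : ℕ → ℝ} {n : ℕ}

theorem prod_one_sub_le_prod_edgeWeight (hp : ∀ i, p i ∈ Set.Icc 0 1) {B : SimpleGraph ℕ}
    {T : Finset (EdgeIdx n)} (hT : ∀ e ∈ T, ¬ B.Adj e.1.1 e.1.2)
    (hinj : Set.InjOn (fun e : EdgeIdx n => (e.1.2 - e.1.1 : ℕ)) T) :
    ∏ i ∈ Finset.Icc 1 n, (1 - p i) ≤ ∏ e ∈ T, edgeWeight p B e := by
  refine prod_le_prod_of_injOn _ (fun i => Set.Icc.one_sub_mem (hp i)) hinj (fun e _ => ?_)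
    fun e he => (if_neg (hT e he)).ge
  have := Fin.lt_def.1 e.2
  exact Finset.mem_Icc.2 ⟨by omega, by omega⟩

theorem injOn_length_of_fst_eq {T : Finset (EdgeIdx n)} {x : ℕ} (hT : ∀ e ∈ T, (e.1.1 : ℕ) = x) :
    Set.InjOn (fun e : EdgeIdx n => (e.1.2 - e.1.1 : ℕ)) T := fun e he e' he' hlength => by
  have h₁ := hT e he
  have h₁' := hT e' he'
  have := Fin.lt_def.1 e.2
  have := Fin.lt_def.1 e'.2
  exact EdgeIdx.ext_val (by omega) (by grind)

theorem injOn_length_of_snd_eq {T : Finset (EdgeIdx n)} {x : ℕ} (hT : ∀ e ∈ T, (e.1.2 : ℕ) = x) :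
    Set.InjOn (fun e : EdgeIdx n => (e.1.2 - e.1.1 : ℕ)) T := fun e he e' he' hlength => by
  have h₂ := hT e he
  have h₂' := hT e' he'
  have := Fin.lt_def.1 e.2
  have := Fin.lt_def.1 e'.2
  exact EdgeIdx.ext_val (by grind) (by omega)

theorem pr_agreesOn_and (p : ℕ → ℝ) (B : SimpleGraph ℕ) [DecidableEq (EdgeIdx n)]
    (T U : Finset (EdgeIdx n)) :
    Pr p n (fun ω => AgreesOn B T ω ∧ AgreesOn B U ω) = ∏ e ∈ T ∪ U, edgeWeight p B e := by
  rw [← pr_agreesOn]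
  congr 1
  funext ω
  simp only [AgreesOn, Finset.mem_union, or_imp, forall_and]

theorem pr_agreesOn_and_sub_le (hp : ∀ i, p i ∈ Set.Icc 0 1) (B : SimpleGraph ℕ)
    [DecidableEq (EdgeIdx n)] {T U : Finset (EdgeIdx n)} {δ : ℝ} (hδ : 0 ≤ δ)
    (hTU : 1 - δ ≤ ∏ e ∈ T ∩ U, edgeWeight p B e) :
    Pr p n (fun ω => AgreesOn B T ω ∧ AgreesOn B U ω) -
        Pr p n (AgreesOn B T) * Pr p n (AgreesOn B U) ≤ δ * Pr p n (AgreesOn B T) := by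
  set joint := Pr p n fun ω => AgreesOn B T ω ∧ AgreesOn B U ω
  have hjoint : Pr p n (AgreesOn B T) * Pr p n (AgreesOn B U) =
      joint * ∏ e ∈ T ∩ U, edgeWeight p B e := by
    rw [pr_agreesOn, pr_agreesOn, ← Finset.prod_union_inter, ← pr_agreesOn_and]
  calc joint - _ = (1 - ∏ e ∈ T ∩ U, edgeWeight p B e) * joint := by rw [hjoint]; ring
    _ ≤ δ * joint := by
        gcongr
        · exact pr_nonneg hp _
        · linarith
    _ ≤ δ * Pr p n (AgreesOn B T) := by
        gcongr
        exact pr_mono hp fun ω hω => hω.1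

end EdgeWeights

/-! ### Copies in blocks of consecutive vertices -/

/-- The outcome `ω` as a graph. -/
def sampleGraph {n : ℕ} (ω : Sample n) : SimpleGraph (Fin n) where
  Adj := sampleAdj ω
  symm := ⟨fun _ _ ⟨e, he, hvw⟩ => ⟨e, he, hvw.symm⟩⟩
  loopless := ⟨fun _ ⟨e, _, hvv⟩ => by
    have := Fin.lt_def.1 e.2
    omega⟩

theorem sampleGraph_adj_iff_of_lt {n : ℕ} (ω : Sample n) {v w : Fin n} (hvw : v < w) :
    (sampleGraph ω).Adj v w ↔ ω ⟨(v, w), hvw⟩ = true := by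
  refine ⟨fun ⟨e, he, h⟩ => ?_, fun h => ⟨_, h, .inl ⟨rfl, rfl⟩⟩⟩
  have := Fin.lt_def.1 e.2
  have := Fin.lt_def.1 hvw
  have hv : e.1.1 = v := Fin.ext (by omega)
  have hw : e.1.2 = w := Fin.ext (by omega)
  subst hv hw
  exact he

theorem AgreesOn.adj_iff {n : ℕ} {B : SimpleGraph ℕ} {T : Finset (EdgeIdx n)} {ω : Sample n}
    (hω : AgreesOn B T ω) {v w : Fin n} (hT : ∀ e : EdgeIdx n, s(e.1.1, e.1.2) = s(v, w) → e ∈ T) :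
    (sampleGraph ω).Adj v w ↔ B.Adj v w := by
  classical
  rcases lt_trichotomy v w with hvw | rfl | hvw
  · rw [sampleGraph_adj_iff_of_lt ω hvw, hω _ (hT _ rfl), decide_eq_true_iff]
  · simp only [SimpleGraph.irrefl]
  · rw [SimpleGraph.adj_comm, B.adj_comm, sampleGraph_adj_iff_of_lt ω hvw,
      hω _ (hT _ Sym2.eq_swap), decide_eq_true_iff]

section Blocks

variable {h : ℕ}

theorem mul_add_fin_div (j : ℕ) (i : Fin h) : (h * j + i) / h = j := by
  rw [Nat.mul_add_div i.pos, Nat.div_eq_of_lt i.2, add_zero]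

/-- The potential edges that lie inside block `j` or have its vertex `h * j + i₀` as an endpoint. -/
def blockEdges (n : ℕ) (i₀ : Fin h) (j : ℕ) : Finset (EdgeIdx n) :=
  {e | ((e.1.1 : ℕ) / h = j ∧ (e.1.2 : ℕ) / h = j) ∨
    (e.1.1 : ℕ) = h * j + i₀ ∨ (e.1.2 : ℕ) = h * j + i₀}

theorem mem_blockEdges {n : ℕ} {i₀ : Fin h} {j : ℕ} {e : EdgeIdx n} :
    e ∈ blockEdges n i₀ j ↔ ((e.1.1 : ℕ) / h = j ∧ (e.1.2 : ℕ) / h = j) ∨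
      (e.1.1 : ℕ) = h * j + i₀ ∨ (e.1.2 : ℕ) = h * j + i₀ :=
  Finset.mem_filter_univ e

theorem blockEdges_subset {n : ℕ} [DecidableEq (EdgeIdx n)] (i₀ : Fin h) (j : ℕ) :
    blockEdges n i₀ j ⊆
      ({e | (e.1.1 : ℕ) / h = j ∧ (e.1.2 : ℕ) / h = j} : Finset _) ∪
        (({e | (e.1.1 : ℕ) = h * j + i₀ ∧ (e.1.2 : ℕ) / h ≠ j} : Finset _) ∪
          ({e | (e.1.2 : ℕ) = h * j + i₀ ∧ (e.1.1 : ℕ) / h ≠ j} : Finset _)) := by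
  intro e he
  have hhub (x : ℕ) (hx : x = h * j + i₀) : x / h = j := hx ▸ mul_add_fin_div j i₀
  have h₁ := hhub e.1.1
  have h₂ := hhub e.1.2
  rw [mem_blockEdges] at he
  simp only [Finset.mem_union, Finset.mem_filter_univ]
  tauto

theorem endpoints_eq_of_mem_blockEdges_inter {n : ℕ} [DecidableEq (EdgeIdx n)] {i₀ : Fin h}
    {j l : ℕ} (hjl : j ≠ l) {e : EdgeIdx n} (he : e ∈ blockEdges n i₀ j ∩ blockEdges n i₀ l) :
    s((e.1.1 : ℕ), (e.1.2 : ℕ)) = s(h * j + i₀, h * l + i₀) := by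
  rw [Finset.mem_inter, mem_blockEdges, mem_blockEdges] at he
  have hhub (x k : ℕ) (hx : x = h * k + i₀) : x / h = k := hx ▸ mul_add_fin_div k i₀
  have := hhub e.1.1 j
  have := hhub e.1.1 l
  have := hhub e.1.2 j
  have := hhub e.1.2 l
  have := Fin.lt_def.1 e.2
  rw [Sym2.eq_iff]
  omega

variable [NeZero h]

theorem ofNat_mul_add_fin (j : ℕ) (i : Fin h) : Fin.ofNat h (h * j + i) = i :=
  Fin.ext (by rw [Fin.val_ofNat, Nat.mul_add_mod, Nat.mod_eq_of_lt i.2])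

/-- The disjoint union of copies of `H` on the blocks `{h * j, …, h * j + h - 1}` of natural
numbers. -/
def blockGraph (H : SimpleGraph (Fin h)) : SimpleGraph ℕ where
  Adj x y := x / h = y / h ∧ H.Adj (Fin.ofNat h x) (Fin.ofNat h y)
  symm := ⟨fun _ _ hxy => ⟨hxy.1.symm, hxy.2.symm⟩⟩
  loopless := ⟨fun _ hxx => hxx.2.ne rfl⟩

variable (H : SimpleGraph (Fin h)) (i₀ : Fin h)

theorem hasClosedCopy_of_agreesOn {n j : ℕ} (hj : h * (j + 1) ≤ n) {ω : Sample n}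
    (hω : AgreesOn (blockGraph H) (blockEdges n i₀ j) ω) : HasClosedCopy (sampleGraph ω) H i₀ := by
  have hlt (i : Fin h) : h * j + i < n := by
    have := i.2
    rw [mul_add_one] at hj
    omega
  let vertex (i : Fin h) : Fin n := ⟨h * j + i, hlt i⟩
  have hinj : Function.Injective vertex := fun i i' hi =>
    Fin.ext (Nat.add_left_cancel (Fin.ext_iff.1 hi))
  have hinner (u w : Fin h) : (sampleGraph ω).Adj (vertex u) (vertex w) ↔ H.Adj u w := by
    rw [hω.adj_iff fun e he => mem_blockEdges.2 (.inl ?_)]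
    · simp only [blockGraph, vertex, mul_add_fin_div, ofNat_mul_add_fin, true_and]
    · rcases Sym2.eq_iff.1 he with ⟨h₁, h₂⟩ | ⟨h₁, h₂⟩ <;>
        simp only [h₁, h₂, vertex, mul_add_fin_div, and_self]
  refine ⟨⟨⟨vertex, hinj⟩, hinner _ _⟩, fun z hz => ?_⟩
  have hblock : (blockGraph H).Adj (vertex i₀) z := by
    refine (hω.adj_iff fun e he => mem_blockEdges.2 (.inr ?_)).1 hz
    rcases Sym2.eq_iff.1 he with ⟨h₁, -⟩ | ⟨-, h₂⟩
    · exact .inl (congrArg Fin.val h₁)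
    · exact .inr (congrArg Fin.val h₂)
  have hzj : (z : ℕ) / h = j := hblock.1.symm.trans (mul_add_fin_div j i₀)
  refine ⟨Fin.ofNat h z, Fin.ext ?_⟩
  change h * j + z % h = z
  rw [← hzj, Nat.div_add_mod]

/-! ### The probability of a copy in a given block -/

variable {p : ℕ → ℝ} {n : ℕ}

theorem prod_le_prod_edgeWeight_inner (hp : ∀ i, p i ∈ Set.Icc 0 1) (B : SimpleGraph ℕ)
    (j : ℕ) :
    ∏ u : Fin h × Fin h, p (u.2 - u.1) * (1 - p (u.2 - u.1)) ≤
      ∏ e : EdgeIdx n with (e.1.1 : ℕ) / h = j ∧ (e.1.2 : ℕ) / h = j, edgeWeight p B e := by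
  have split (x : ℕ) (hx : x / h = j) : h * j + Fin.ofNat h x = x := hx ▸ Nat.div_add_mod x h
  refine prod_le_prod_of_injOn (fun e => (Fin.ofNat h e.1.1, Fin.ofNat h e.1.2)) ?_ ?_
    (fun _ _ => Finset.mem_univ _) ?_
  · exact fun u => unitInterval.mul_mem (hp _) (Set.Icc.one_sub_mem (hp _))
  · simp only [Set.InjOn, SetLike.mem_coe, Finset.mem_filter_univ, Prod.mk.injEq]
    rintro e ⟨h₁, h₂⟩ e' ⟨h₁', h₂'⟩ ⟨hofNat₁, hofNat₂⟩
    exact EdgeIdx.ext_val (by rw [← split _ h₁, ← split _ h₁', hofNat₁])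
      (by rw [← split _ h₂, ← split _ h₂', hofNat₂])
  · simp only [Finset.mem_filter_univ]
    rintro e ⟨h₁, h₂⟩
    have hlength : (Fin.ofNat h e.1.2 : ℕ) - Fin.ofNat h e.1.1 = e.1.2 - e.1.1 := by
      have := split _ h₁
      have := split _ h₂
      omega
    have hpe := hp (e.1.2 - e.1.1)
    simp only [hlength, edgeWeight]
    split_ifs
    · exact mul_le_of_le_one_right hpe.1 (Set.Icc.one_sub_mem hpe).2
    · exact mul_le_of_le_one_left (Set.Icc.one_sub_mem hpe).1 hpe.2

theorem mul_prod_sq_le_pr_agreesOn_blockEdges (hp : ∀ i, p i ∈ Set.Icc 0 1) (j : ℕ) :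
    (∏ u : Fin h × Fin h, p (u.2 - u.1) * (1 - p (u.2 - u.1))) *
        (∏ i ∈ Finset.Icc 1 n, (1 - p i)) ^ 2 ≤
      Pr p n (AgreesOn (blockGraph H) (blockEdges n i₀ j)) := by
  classical
  have hw := edgeWeight_mem_Icc (n := n) hp (blockGraph H)
  let weight (T : Finset (EdgeIdx n)) : ℝ := ∏ e ∈ T, edgeWeight p (blockGraph H) e
  have hweight (T : Finset (EdgeIdx n)) : 0 ≤ weight T := Finset.prod_nonneg fun e _ => (hw e).1
  let inner : Finset (EdgeIdx n) := {e | (e.1.1 : ℕ) / h = j ∧ (e.1.2 : ℕ) / h = j}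
  let right : Finset (EdgeIdx n) := {e | (e.1.1 : ℕ) = h * j + i₀ ∧ (e.1.2 : ℕ) / h ≠ j}
  let left : Finset (EdgeIdx n) := {e | (e.1.2 : ℕ) = h * j + i₀ ∧ (e.1.1 : ℕ) / h ≠ j}
  have hnonneg : 0 ≤ ∏ i ∈ Finset.Icc 1 n, (1 - p i) :=
    Finset.prod_nonneg fun i _ => sub_nonneg.2 (hp i).2
  have hinner := prod_le_prod_edgeWeight_inner (h := h) (n := n) hp (blockGraph H) j
  have hright : ∏ i ∈ Finset.Icc 1 n, (1 - p i) ≤ weight right := by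
    have hmem (e) (he : e ∈ right) := (Finset.mem_filter_univ e).1 he
    refine prod_one_sub_le_prod_edgeWeight hp (fun e he hadj => (hmem e he).2 ?_)
      (injOn_length_of_fst_eq fun e he => (hmem e he).1)
    rw [← hadj.1, (hmem e he).1, mul_add_fin_div]
  have hleft : ∏ i ∈ Finset.Icc 1 n, (1 - p i) ≤ weight left := by
    have hmem (e) (he : e ∈ left) := (Finset.mem_filter_univ e).1 he
    refine prod_one_sub_le_prod_edgeWeight hp (fun e he hadj => (hmem e he).2 ?_)
      (injOn_length_of_snd_eq fun e he => (hmem e he).1)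
    rw [hadj.1, (hmem e he).1, mul_add_fin_div]
  calc _ ≤ weight inner * (weight right * weight left) := by
        rw [sq]
        exact mul_le_mul hinner (mul_le_mul hright hleft hnonneg (hweight _))
          (mul_nonneg hnonneg hnonneg) (hweight _)
    _ ≤ weight inner * weight (right ∪ left) :=
        mul_le_mul_of_nonneg_left (prod_mul_prod_le_prod_union hw _ _) (hweight _)
    _ ≤ weight (inner ∪ (right ∪ left)) := prod_mul_prod_le_prod_union hw _ _
    _ ≤ weight (blockEdges n i₀ j) :=
        Finset.prod_le_prod_of_subset_of_le_one (blockEdges_subset i₀ j) (fun e _ => (hw e).1)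
          fun e _ _ => (hw e).2
    _ = _ := (pr_agreesOn p _ _).symm

/-! ### Covariances of copies in two blocks -/

theorem one_sub_le_prod_blockEdges_inter (hp : ∀ i, p i ∈ Set.Icc 0 1)
    [DecidableEq (EdgeIdx n)] {j l : ℕ} (hjl : j ≠ l) :
    1 - p (h * Nat.dist j l) ≤
      ∏ e ∈ blockEdges n i₀ j ∩ blockEdges n i₀ l, edgeWeight p (blockGraph H) e := by
  rcases (blockEdges n i₀ j ∩ blockEdges n i₀ l).eq_empty_or_nonempty with hempty | ⟨e, he⟩
  · rw [hempty, Finset.prod_empty]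
    exact (Set.Icc.one_sub_mem (hp _)).2
  have hends := endpoints_eq_of_mem_blockEdges_inter hjl he
  have hsingleton : blockEdges n i₀ j ∩ blockEdges n i₀ l = {e} := by
    refine Finset.eq_singleton_iff_unique_mem.2 ⟨he, fun e' he' => ?_⟩
    have hends' := (endpoints_eq_of_mem_blockEdges_inter hjl he').trans hends.symm
    have := Fin.lt_def.1 e.2
    have := Fin.lt_def.1 e'.2
    rw [Sym2.eq_iff] at hends'
    exact EdgeIdx.ext_val (by omega) (by omega)
  have hlength : (e.1.2 - e.1.1 : ℕ) = h * Nat.dist j l := by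
    rw [← Nat.dist_mul_left, ← Nat.dist_add_add_right _ i₀,
      ← Nat.dist_eq_sub_of_le (Fin.lt_def.1 e.2).le]
    rcases Sym2.eq_iff.1 hends with ⟨h₁, h₂⟩ | ⟨h₁, h₂⟩ <;> rw [h₁, h₂]
    exact Nat.dist_comm _ _
  have hnot_adj : ¬ (blockGraph H).Adj e.1.1 e.1.2 := by
    rintro ⟨hdiv, -⟩
    rcases Sym2.eq_iff.1 hends with ⟨h₁, h₂⟩ | ⟨h₁, h₂⟩ <;>
      rw [h₁, h₂, mul_add_fin_div, mul_add_fin_div] at hdiv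
    exacts [hjl hdiv, hjl hdiv.symm]
  rw [hsingleton, Finset.prod_singleton, edgeWeight, if_neg hnot_adj, hlength]

theorem covariance_agreesOn_blockEdges_le (hp : ∀ i, p i ∈ Set.Icc 0 1) (j l : ℕ) :
    Pr p n (fun ω => AgreesOn (blockGraph H) (blockEdges n i₀ j) ω ∧
          AgreesOn (blockGraph H) (blockEdges n i₀ l) ω) -
        Pr p n (AgreesOn (blockGraph H) (blockEdges n i₀ j)) *
          Pr p n (AgreesOn (blockGraph H) (blockEdges n i₀ l)) ≤
      (if l = j then 1 else p (h * Nat.dist j l)) *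
        Pr p n (AgreesOn (blockGraph H) (blockEdges n i₀ j)) := by
  classical
  split_ifs with hlj
  · refine pr_agreesOn_and_sub_le hp _ zero_le_one ?_
    rw [sub_self]
    exact Finset.prod_nonneg fun e _ => (edgeWeight_mem_Icc hp _ e).1
  · exact pr_agreesOn_and_sub_le hp _ (hp _).1
      (one_sub_le_prod_blockEdges_inter H i₀ hp (Ne.symm hlj))

theorem sum_mul_dist_le_sum_of_injOn (hp : ∀ i, 0 ≤ p i) {m j : ℕ} {s : Finset ℕ}
    (hm : h * m ≤ n) (hs : ∀ l ∈ s, 0 < Nat.dist j l ∧ Nat.dist j l ≤ m)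
    (hinj : Set.InjOn (Nat.dist j) s) :
    ∑ l ∈ s, p (h * Nat.dist j l) ≤ ∑ i ∈ Finset.Icc 1 n, p i := by
  have hinj_mul : Set.InjOn (fun l => h * Nat.dist j l) s := fun l hl l' hl' hll' =>
    hinj hl hl' (Nat.eq_of_mul_eq_mul_left (NeZero.pos h) hll')
  rw [← Finset.sum_image hinj_mul]
  refine Finset.sum_le_sum_of_subset_of_nonneg (Finset.image_subset_iff.2 fun l hl => ?_)
    fun i _ _ => hp i
  exact Finset.mem_Icc.2 ⟨Nat.mul_pos (NeZero.pos h) (hs l hl).1,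
    (Nat.mul_le_mul_left h (hs l hl).2).trans hm⟩

theorem sum_mul_dist_le (hp : ∀ i, 0 ≤ p i) {m j : ℕ} (hm : h * m ≤ n) (hj : j < m) :
    ∑ l ∈ Finset.range m, (if l = j then 1 else p (h * Nat.dist j l)) ≤
      1 + 2 * ∑ i ∈ Finset.Icc 1 n, p i := by
  have hleft : ∑ l ∈ Finset.range m with l < j, p (h * Nat.dist j l) ≤ ∑ i ∈ Finset.Icc 1 n, p i :=
    sum_mul_dist_le_sum_of_injOn hp hm (by grind [Nat.dist]) fun l hl l' hl' => by grind [Nat.dist]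
  have hright : ∑ l ∈ Finset.range m with j < l, p (h * Nat.dist j l) ≤
      ∑ i ∈ Finset.Icc 1 n, p i :=
    sum_mul_dist_le_sum_of_injOn hp hm (by grind [Nat.dist]) fun l hl l' hl' => by grind [Nat.dist]
  have hone : ∑ l ∈ Finset.range m, (if l = j then (1 : ℝ) else 0) = 1 := by
    rw [Finset.sum_ite_eq', if_pos (Finset.mem_range.2 hj)]
  have hsplit : ∑ l ∈ Finset.range m, (if l = j then 1 else p (h * Nat.dist j l)) =
      ∑ l ∈ Finset.range m, (if l = j then 1 else 0) +
        (∑ l ∈ Finset.range m with l < j, p (h * Nat.dist j l) +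
          ∑ l ∈ Finset.range m with j < l, p (h * Nat.dist j l)) := by
    rw [Finset.sum_filter, Finset.sum_filter, ← Finset.sum_add_distrib, ← Finset.sum_add_distrib]
    refine Finset.sum_congr rfl fun l _ => ?_
    split_ifs <;> first | omega | simp
  linarith

theorem pr_forall_not_agreesOn_mul_sum_le (hp : ∀ i, p i ∈ Set.Icc 0 1) {m : ℕ}
    (hm : h * m ≤ n) :
    Pr p n (fun ω => ∀ j ∈ Finset.range m, ¬ AgreesOn (blockGraph H) (blockEdges n i₀ j) ω) *
        ∑ j ∈ Finset.range m, Pr p n (AgreesOn (blockGraph H) (blockEdges n i₀ j)) ≤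
      1 + 2 * ∑ i ∈ Finset.Icc 1 n, p i := by
  let E (j : ℕ) : Sample n → Prop := AgreesOn (blockGraph H) (blockEdges n i₀ j)
  set μ := ∑ j ∈ Finset.range m, Pr p n (E j)
  set S := ∑ i ∈ Finset.Icc 1 n, p i
  have hvariance : Pr p n (fun ω => ∀ j ∈ Finset.range m, ¬ E j ω) * μ ^ 2 ≤ (1 + 2 * S) * μ :=
    calc _ ≤ _ := pr_forall_not_mul_sq_le hp _ E
      _ ≤ ∑ j ∈ Finset.range m, (1 + 2 * S) * Pr p n (E j) := by
          gcongr with j hj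
          refine (Finset.sum_le_sum fun l _ =>
            covariance_agreesOn_blockEdges_le H i₀ hp j l).trans ?_
          rw [← Finset.sum_mul]
          exact mul_le_mul_of_nonneg_right
            (sum_mul_dist_le (fun i => (hp i).1) hm (Finset.mem_range.1 hj)) (pr_nonneg hp _)
      _ = (1 + 2 * S) * μ := (Finset.mul_sum ..).symm
  have hμ_nonneg : 0 ≤ μ := Finset.sum_nonneg fun j _ => pr_nonneg hp (E j)
  rcases hμ_nonneg.eq_or_lt' with hμ | hμ
  · have hS : 0 ≤ S := Finset.sum_nonneg fun i _ => (hp i).1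
    rw [hμ, mul_zero]
    positivity
  · exact le_of_mul_le_mul_right (by rwa [mul_assoc, ← sq]) hμ

theorem pr_not_hasClosedCopy_mul_le (hp : ∀ i, p i ∈ Set.Icc 0 1) :
    Pr p n (fun ω => ¬ HasClosedCopy (sampleGraph ω) H i₀) *
        ((n / h : ℕ) * ((∏ u : Fin h × Fin h, p (u.2 - u.1) * (1 - p (u.2 - u.1))) *
          (∏ i ∈ Finset.Icc 1 n, (1 - p i)) ^ 2)) ≤
      1 + 2 * ∑ i ∈ Finset.Icc 1 n, p i := by
  have hfit : h * (n / h) ≤ n := Nat.mul_div_le n h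
  set blockBound := (∏ u : Fin h × Fin h, p (u.2 - u.1) * (1 - p (u.2 - u.1))) *
    (∏ i ∈ Finset.Icc 1 n, (1 - p i)) ^ 2
  have hbound_nonneg : 0 ≤ blockBound := mul_nonneg (Finset.prod_nonneg fun u _ =>
    mul_nonneg (hp _).1 (sub_nonneg.2 (hp _).2)) (sq_nonneg _)
  refine (mul_le_mul (pr_mono hp fun ω hω j hj hE => ?_) ?_ (by positivity)
    (pr_nonneg hp _)).trans (pr_forall_not_agreesOn_mul_sum_le H i₀ hp hfit)
  · exact hω <| hasClosedCopy_of_agreesOn H i₀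
      ((Nat.mul_le_mul_left h (Finset.mem_range.1 hj)).trans hfit) hE
  · have := Finset.card_nsmul_le_sum (Finset.range (n / h)) _ blockBound fun j _ =>
      mul_prod_sq_le_pr_agreesOn_blockEdges (n := n) H i₀ hp j
    rwa [Finset.card_range, nsmul_eq_mul] at this

end Blocks

/-! ### Asymptotics -/

theorem eventually_one_le_mul_rpow {P : ℕ → ℝ} (hP : ∀ n, 0 < P n)
    (hlim : Tendsto (fun n : ℕ => Real.log (P n) / Real.log n) atTop (nhds 0)) {ε : ℝ}
    (hε : 0 < ε) : ∀ᶠ n : ℕ in atTop, 1 ≤ P n * (n : ℝ) ^ ε := by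
  filter_upwards [hlim.eventually (lt_mem_nhds (neg_lt_zero.2 hε)), eventually_ge_atTop 2]
    with n hratio hn
  have hlog : 0 < Real.log n := Real.log_pos (by exact_mod_cast hn)
  have hpow : 0 < (n : ℝ) ^ ε := by positivity
  rw [lt_div_iff₀ hlog] at hratio
  rw [← Real.log_nonneg_iff (mul_pos (hP n) hpow), Real.log_mul (hP n).ne' hpow.ne',
    Real.log_rpow (by positivity)]
  linarith

theorem one_add_sum_le_of_one_le_prod_one_sub_mul {ι : Type*} {s : Finset ι} {p : ι → ℝ} {t : ℝ}
    (hp : ∀ i ∈ s, p i ≤ 1) (ht : 0 ≤ t) (hprod : 1 ≤ (∏ i ∈ s, (1 - p i)) * t) :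
    1 + ∑ i ∈ s, p i ≤ t := by
  have hexp : ∏ i ∈ s, (1 - p i) ≤ Real.exp (-∑ i ∈ s, p i) := by
    rw [← Finset.sum_neg_distrib, Real.exp_sum]
    exact Finset.prod_le_prod (fun i hi => sub_nonneg.2 (hp i hi))
      fun i _ => Real.one_sub_le_exp_neg _
  calc 1 + ∑ i ∈ s, p i ≤ Real.exp (∑ i ∈ s, p i) := by
        rw [add_comm]
        exact Real.add_one_le_exp _
    _ ≤ Real.exp (∑ i ∈ s, p i) * (Real.exp (-∑ i ∈ s, p i) * t) :=
        le_mul_of_one_le_right (Real.exp_nonneg _)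
          (hprod.trans (mul_le_mul_of_nonneg_right hexp ht))
    _ = t := by rw [← mul_assoc, ← Real.exp_add, add_neg_cancel, Real.exp_zero, one_mul]

theorem le_two_mul_mul_div {h n : ℕ} (hh : 0 < h) (hn : h ≤ n) : n ≤ 2 * h * (n / h) := by
  have := Nat.mul_le_mul_left h (Nat.div_pos hn hh)
  have := Nat.div_add_mod n h
  have := Nat.mod_lt n hh
  rw [mul_assoc]
  omega

/-- The sequences `p̄` considered in the theorem: `0 < p i < 1` and
`∏_{i ≤ n} (1 - p i) = n ^ o(1)`. -/
structure Admissible (p : ℕ → ℝ) : Prop where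
  pos_and_lt_one : ∀ i, 0 < p i ∧ p i < 1
  tendsto_log_div_log : Tendsto
    (fun n : ℕ => Real.log (∏ i ∈ Finset.Icc 1 n, (1 - p i)) / Real.log n) atTop (nhds 0)

namespace Admissible

variable {p : ℕ → ℝ}

theorem mem_Icc (hp : Admissible p) (i : ℕ) : p i ∈ Set.Icc 0 1 :=
  ⟨(hp.pos_and_lt_one i).1.le, (hp.pos_and_lt_one i).2.le⟩

theorem one_sub_pos (hp : Admissible p) (i : ℕ) : 0 < 1 - p i :=
  sub_pos.2 (hp.pos_and_lt_one i).2

theorem tendsto_zero_of_mul_le (hp : Admissible p) {h : ℕ} [NeZero h] {c : ℝ} (hc : 0 < c)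
    {f : ℕ → ℝ} (hf_nonneg : ∀ n, 0 ≤ f n)
    (hf : ∀ n, f n * ((n / h : ℕ) * (c * (∏ i ∈ Finset.Icc 1 n, (1 - p i)) ^ 2)) ≤
      1 + 2 * ∑ i ∈ Finset.Icc 1 n, p i) : Tendsto f atTop (nhds 0) := by
  have hlim : Tendsto (fun n : ℕ => 4 * h / c / (n : ℝ) ^ (1 / 4 : ℝ)) atTop (nhds 0) :=
    Tendsto.div_atTop tendsto_const_nhds
      ((tendsto_rpow_atTop (by norm_num)).comp tendsto_natCast_atTop_atTop)
  refine squeeze_zero' (Eventually.of_forall hf_nonneg) ?_ hlim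
  filter_upwards [eventually_one_le_mul_rpow
    (fun n => Finset.prod_pos fun i _ => hp.one_sub_pos i) hp.tendsto_log_div_log
    (show (0 : ℝ) < 1 / 4 by norm_num), eventually_ge_atTop h] with n hPt hn
  have hn_pos : 0 < n := (NeZero.pos h).trans_le hn
  set t := (n : ℝ) ^ (1 / 4 : ℝ) with ht
  set P := ∏ i ∈ Finset.Icc 1 n, (1 - p i)
  have ht_pos : 0 < t := by positivity
  have ht_pow : t ^ 4 = n := by
    rw [ht, ← Real.rpow_natCast, ← Real.rpow_mul n.cast_nonneg]
    norm_num
  have hsum : 1 + ∑ i ∈ Finset.Icc 1 n, p i ≤ t :=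
    one_add_sum_le_of_one_le_prod_one_sub_mul (fun i _ => (hp.mem_Icc i).2) ht_pos.le hPt
  have hdiv : (n : ℝ) ≤ 2 * h * (n / h : ℕ) := by
    exact_mod_cast le_two_mul_mul_div (NeZero.pos h) hn
  have hmain : f n * ((n / h : ℕ) * (c * P ^ 2)) ≤ 2 * t := (hf n).trans (by linarith)
  have hfn := hf_nonneg n
  rw [div_div, le_div_iff₀ (by positivity)]
  refine le_of_mul_le_mul_right ?_ (pow_pos ht_pos 3)
  calc f n * (c * t) * t ^ 3 = f n * (n * c) := by rw [← ht_pow]; ring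
    _ ≤ f n * (n * c) * (P * t) ^ 2 := le_mul_of_one_le_right (by positivity) (one_le_pow₀ hPt)
    _ ≤ f n * (2 * h * (n / h : ℕ) * c) * (P * t) ^ 2 := by gcongr
    _ = 2 * h * (f n * ((n / h : ℕ) * (c * P ^ 2))) * t ^ 2 := by ring
    _ ≤ 2 * h * (2 * t) * t ^ 2 := by
        gcongr 2 * h * ?_ * t ^ 2
    _ = 4 * h * t ^ 3 := by ring

theorem tendsto_pr_hasClosedCopy_one_of_fin (hp : Admissible p) {h : ℕ}
    (H : SimpleGraph (Fin h)) (i₀ : Fin h) :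
    Tendsto (fun n => Pr p n fun ω => HasClosedCopy (sampleGraph ω) H i₀) atTop (nhds 1) := by
  have : NeZero h := ⟨i₀.pos.ne'⟩
  have hc : 0 < ∏ u : Fin h × Fin h, p (u.2 - u.1) * (1 - p (u.2 - u.1)) :=
    Finset.prod_pos fun u _ => mul_pos (hp.pos_and_lt_one _).1 (hp.one_sub_pos _)
  have hfail : Tendsto (fun n => Pr p n fun ω => ¬ HasClosedCopy (sampleGraph ω) H i₀) atTop
      (nhds 0) :=
    hp.tendsto_zero_of_mul_le hc (fun n => pr_nonneg hp.mem_Icc _)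
      fun n => pr_not_hasClosedCopy_mul_le H i₀ hp.mem_Icc
  rw [← sub_zero (1 : ℝ)]
  exact (hfail.const_sub 1).congr fun n => (eq_sub_of_add_eq (pr_add_pr_not p _)).symm

theorem tendsto_pr_hasClosedCopy_one (hp : Admissible p) {W : Type*} [Finite W]
    (H : SimpleGraph W) (w : W) :
    Tendsto (fun n => Pr p n fun ω => HasClosedCopy (sampleGraph ω) H w) atTop (nhds 1) := by
  have := Fintype.ofFinite W
  let e : H ≃g H.overFin rfl := H.overFinIso rfl
  exact tendsto_of_tendsto_of_tendsto_of_le_of_le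
    (hp.tendsto_pr_hasClosedCopy_one_of_fin _ (e w)) tendsto_const_nhds
    (fun n => pr_mono hp.mem_Icc fun ω hω => hω.of_iso e) fun n => pr_le_one hp.mem_Icc _

end Admissible

/-! ### The sequence of sentences -/

/-- `∀ … ∀ ⊤` with `k` quantifiers, a tautology of depth exactly `k`. -/
def nestedTrue (L : Language) : (k m : ℕ) → L.BoundedFormula Empty m
  | 0, _ => ⊤
  | k + 1, m => .all (nestedTrue L k (m + 1))

theorem qDepth_nestedTrue (L : Language) (k m : ℕ) : qDepth (nestedTrue L k m) = k := by
  induction k generalizing m with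
  | zero => rfl
  | succ k ih => exact congrArg (· + 1) (ih (m + 1))

theorem realize_nestedTrue (L : Language) {V : Type*} [L.Structure V] (k m : ℕ) (v : Empty → V)
    (xs : Fin m → V) : (nestedTrue L k m).Realize v xs := by
  induction k generalizing m with
  | zero => exact id
  | succ _ ih => exact fun a => ih (m + 1) (Fin.snoc xs a)

theorem exists_qDepth_eq_and_satL_iff {φ : Language.graph.Sentence} {k : ℕ} (hφ : qDepth φ ≤ k) :
    ∃ ψ : Language.graph.Sentence, qDepth ψ = k ∧
      ∀ {n : ℕ} (ω : Sample n), SatL ω ψ ↔ SatL ω φ := by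
  refine ⟨(nestedTrue _ k 0).imp φ, ?_, fun {n} ω => ?_⟩
  · rw [qDepth, qDepth_nestedTrue, max_eq_left hφ]
  · let _ := graphStructure ω
    exact ⟨fun h => h (realize_nestedTrue _ k 0 _ _), fun h _ => h⟩

/-- Asymptotically almost sure truth for all admissible sequences simultaneously. -/
def AlmostSure (φ : Language.graph.Sentence) : Prop :=
  ∀ p, Admissible p → Tendsto (fun n => ProbL p n φ) atTop (nhds 1)

theorem AlmostSure.congr {φ ψ : Language.graph.Sentence} (hφ : AlmostSure φ)
    (hψ : ∀ {n : ℕ} (ω : Sample n), SatL ω ψ ↔ SatL ω φ) : AlmostSure ψ := fun p hp => by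
  simpa only [ProbL, hψ] using hφ p hp

theorem almostSure_top : AlmostSure ⊤ := fun p _ => by
  have hprob (n : ℕ) : ProbL p n ⊤ = 1 := by
    have hfail : Pr p n (fun ω => ¬ SatL ω ⊤) = 0 := pr_eq_zero fun ω hω => hω id
    rw [← pr_add_pr_not p (SatL · ⊤), hfail, add_zero, ProbL]
  simpa only [hprob] using tendsto_const_nhds

theorem almostSure_of_hasClosedCopy {W : Type*} [Finite W] {H : SimpleGraph W} {w : W}
    {φ : Language.graph.Sentence}
    (hφ : ∀ (V : Type) (G : SimpleGraph V), HasClosedCopy G H w →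
      @Language.Sentence.Realize _ V G.structure φ) : AlmostSure φ := fun _ hp =>
  tendsto_of_tendsto_of_tendsto_of_le_of_le (hp.tendsto_pr_hasClosedCopy_one H w)
    tendsto_const_nhds (fun _ => pr_mono hp.mem_Icc fun ω hω => hφ _ (sampleGraph ω) hω)
    fun _ => pr_le_one hp.mem_Icc _

/-- `φ` fails in graphs of order at most `y`. -/
def ForcesOrderAbove (y : ℕ) (φ : Language.graph.Sentence) : Prop :=
  ∀ {n : ℕ} (ω : Sample n), SatL ω φ → y < n

theorem exists_almostSure_forcesOrderAbove (c : Code) : ∃ D, ∀ j, ∀ y ∈ c.eval j,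
    ∃ φ, qDepth φ ≤ D + j ∧ AlmostSure φ ∧ ForcesOrderAbove y φ := by
  obtain ⟨D, hD⟩ := exists_halting_sentence c
  refine ⟨D, fun j y hy => ?_⟩
  obtain ⟨φ, hdepth, hφ⟩ := hD j
  obtain ⟨hforces, M, hcopy⟩ := hφ y hy
  exact ⟨φ, hdepth, almostSure_of_hasClosedCopy hcopy, fun {n} ω hω =>
    (hforces _ (sampleGraph ω) hω).trans_eq (Nat.card_fin n)⟩

theorem exists_almostSure_qDepth_eq_forcesOrderAbove (k : ℕ) (y : Part ℕ) :
    ∃ ψ, qDepth ψ = k ∧ AlmostSure ψ ∧ ∀ φ, qDepth φ ≤ k → AlmostSure φ →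
      ∀ z ∈ y, ForcesOrderAbove z φ → ForcesOrderAbove z ψ := by
  by_cases h : ∃ φ, qDepth φ ≤ k ∧ AlmostSure φ ∧ ∃ z ∈ y, ForcesOrderAbove z φ
  · obtain ⟨φ, hdepth, hφ, z, hz, hforces⟩ := h
    obtain ⟨ψ, hψ, hiff⟩ := exists_qDepth_eq_and_satL_iff hdepth
    refine ⟨ψ, hψ, hφ.congr hiff, fun _ _ _ z' hz' _ n ω hω => ?_⟩
    rw [Part.mem_unique hz' hz]
    exact hforces ω ((hiff ω).1 hω)
  · obtain ⟨ψ, hψ, hiff⟩ := exists_qDepth_eq_and_satL_iff (φ := ⊤) k.zero_le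
    exact ⟨ψ, hψ, almostSure_top.congr hiff, fun φ hdepth hφ z hz hforces =>
      absurd ⟨φ, hdepth, hφ, z, hz, hforces⟩ h⟩

theorem exists_sentences_outgrowing_computable : ∃ ψ : ℕ → Language.graph.Sentence,
    (∀ k, qDepth (ψ k) = k) ∧ (∀ k, AlmostSure (ψ k)) ∧
      ∀ g : ℕ → ℕ, Computable g → ∃ k, 1 ≤ k ∧ ForcesOrderAbove (g k) (ψ k) := by
  choose ψ hdepth hψ hstrongest using fun k =>
    exists_almostSure_qDepth_eq_forcesOrderAbove k
      ((Denumerable.ofNat Code (k / 2).unpair.1).eval (k / 2))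
  refine ⟨ψ, hdepth, hψ, fun g hg => ?_⟩
  have hdouble : Computable fun n => g (2 * n) :=
    hg.comp (Primrec.nat_mul.comp (Primrec.const 2) Primrec.id).to_comp
  obtain ⟨c, hc⟩ := Code.exists_code.1 (Partrec.nat_iff.1 hdouble.partrec)
  obtain ⟨D, hD⟩ := exists_almostSure_forcesOrderAbove c
  let j := Nat.pair (Encodable.encode c) (D + 1)
  have hDj : D + 1 ≤ j := Nat.right_le_pair _ _
  have hj : 2 * j / 2 = j := Nat.mul_div_cancel_left j two_pos
  have hcode : Denumerable.ofNat Code (2 * j / 2).unpair.1 = c := by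
    rw [hj, Nat.unpair_pair, Denumerable.ofNat_encode]
  have hvalue : g (2 * j) ∈ c.eval j := by
    rw [hc]
    exact Part.mem_some _
  obtain ⟨φ, hφ_depth, hφ, hforces⟩ := hD j _ hvalue
  refine ⟨2 * j, by omega, hstrongest (2 * j) φ (by omega) hφ _ ?_ hforces⟩
  rwa [hcode, hj]

/-- There is a sequence `ψ_k` of sentences of the language `L`, with `ψ_k`
of quantifier depth `k`, such that for every `p̄` with `0 < p i < 1` satisfying
`log (∏_{i=1}^n (1 - p i)) / log n → 0`:  `Prob(n, p̄; ψ_k) → 1` for every `k`, but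
`m k = min {i : Prob(i, p̄; ψ_k) > 0}` grows faster than every computable function. -/
theorem statement_16 :
    ∃ ψ : ℕ → Language.graph.Sentence,
      (∀ k, 1 ≤ k → qDepth (ψ k) = k) ∧
      ∀ p : ℕ → ℝ, (∀ i, 0 < p i ∧ p i < 1) →
        Tendsto
          (fun n : ℕ => Real.log (∏ i ∈ Finset.Icc 1 n, (1 - p i)) / Real.log n)
          atTop (nhds 0) →
        (∀ k, 1 ≤ k → Tendsto (fun n => ProbL p n (ψ k)) atTop (nhds 1)) ∧
        ¬ ∃ g : ℕ → ℕ, Computable g ∧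
            ∀ k, 1 ≤ k → sInf {i : ℕ | 0 < ProbL p i (ψ k)} ≤ g k := by
  obtain ⟨ψ, hdepth, hψ, houtgrows⟩ := exists_sentences_outgrowing_computable
  refine ⟨ψ, fun k _ => hdepth k, fun p hp hlim => ?_⟩
  have hprob (k : ℕ) : Tendsto (fun n => ProbL p n (ψ k)) atTop (nhds 1) := hψ k p ⟨hp, hlim⟩
  refine ⟨fun k _ => hprob k, fun ⟨g, hg, hle⟩ => ?_⟩
  obtain ⟨k, hk, hforces⟩ := houtgrows g hg
  have hnonempty : {i : ℕ | 0 < ProbL p i (ψ k)}.Nonempty :=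
    ((hprob k).eventually (lt_mem_nhds zero_lt_one)).exists
  have hmin : 0 < ProbL p _ (ψ k) := Nat.sInf_mem hnonempty
  exact hmin.ne' (pr_eq_zero fun ω hω => (hforces ω hω).not_ge (hle k hk))

end RandomGraph
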